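/- Let 1 ≤ p ≤ q ≤ n be integers, μ = (n−p)^p, and define the entire function G(x) := Σ_{ℓ ≥ p(n−p)} ((px)^ℓ/ℓ!) · E^{ℓ,p}(1_{λ⊇μ} · H(λ)). Set u(x) := x·G′(x)/G(x) − p·x on the interval where G(x) ≠ 0. Then u extends analytically to a neighborhood of x = 0 with u(0) = p(n−p) and u′(0) = −p(n−q)/n, and u satisfies the Painlevé V type equation x²u‴ + xu″ + 6x(u′)² − 4uu′ + 4Q(x)u′ − 2Q′(x)u + 2R(x) = 0, where 4Q(x) = −x² + 2(n+2(p−q))x − (n−2p)² and 2R(x) = p(p−q)(x + n − 2p). -/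

import Mathlib

open MeasureTheory Filter Real
open scoped BigOperators Topology

noncomputable section

/-- Hook length of the (0-indexed) cell `c` in the Young diagram `μ`. -/
def hookLen (μ : YoungDiagram) (c : ℕ × ℕ) : ℕ :=
  μ.rowLen c.1 + μ.colLen c.2 - c.1 - c.2 - 1

/-- Product of all hook lengths of `μ`. -/
def hookProd (μ : YoungDiagram) : ℕ := ∏ c ∈ μ.cells, hookLen μ c

/-- Number of semistandard Young tableaux of shape `μ` with entries in `{0, …, q-1}`. -/
def numSSYT (μ : YoungDiagram) (q : ℕ) : ℕ :=
  Set.ncard {T : SemistandardYoungTableau μ | ∀ c ∈ μ.cells, T c.1 c.2 < q}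

/-- Number of standard Young tableaux of shape `μ`, via the hook length formula. -/
def fSYT (μ : YoungDiagram) : ℝ := (Nat.factorial μ.card : ℝ) / (hookProd μ : ℝ)

/-- The probability `P^{ℓ,p}` of a partition `μ` of `ℓ`. -/
def Pword (ℓ p : ℕ) (μ : YoungDiagram) : ℝ :=
  fSYT μ * (numSSYT μ p : ℝ) / (p : ℝ) ^ ℓ

/-- The expectation `E^{ℓ,p}` of a function `g` of the partition. -/
def Eword (ℓ p : ℕ) (g : YoungDiagram → ℝ) : ℝ :=
  ∑' μ : YoungDiagram, if μ.card = ℓ then Pword ℓ p μ * g μ else 0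

/-- The expectation `E_{x,p}` with respect to the Poissonized measure `P_{x,p}`. -/
def Epois (x : ℝ) (p : ℕ) (g : YoungDiagram → ℝ) : ℝ :=
  ∑' μ : YoungDiagram,
    Real.exp (-(p * x)) * (p * x) ^ μ.card / (Nat.factorial μ.card : ℝ) *
      Pword μ.card p μ * g μ

/-- Pochhammer symbol `(x)_m = x (x+1) ⋯ (x+m-1)`. -/
def pochRe (x : ℝ) (m : ℕ) : ℝ := ∏ j ∈ Finset.range m, (x + j)

/-- `(x)_κ = ∏_i (x + 1 - i)_{κ_i}` (with `i` 1-indexed). -/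
def pochPart (x : ℝ) (μ : YoungDiagram) : ℝ :=
  ∏ i ∈ Finset.range (μ.colLen 0), pochRe (x - i) (μ.rowLen i)

/-- Strip hook product `H(λ) = ∏_{(i,j) ∈ λ, n-q < j ≤ n-p} h^λ_{ij}` (1-indexed `j`). -/
def Hstrip (n p q : ℕ) (μ : YoungDiagram) : ℕ :=
  ∏ c ∈ μ.cells.filter (fun c => n - q ≤ c.2 ∧ c.2 < n - p), hookLen μ c

/-- The indicator `1_{λ ⊇ (n-p)^p}`. -/
def indSup (n p : ℕ) (μ : YoungDiagram) : ℝ :=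
  if ∀ i < p, n - p ≤ μ.rowLen i then 1 else 0

/-- Vandermonde determinant `Δ_p(x) = ∏_{i<j} (x_i - x_j)`. -/
def vdm {p : ℕ} (x : Fin p → ℝ) : ℝ :=
  ∏ i : Fin p, ∏ j ∈ Finset.Ioi i, (x i - x j)

/-- The entire function `G(x) = Σ_{ℓ ≥ p(n−p)} ((px)^ℓ/ℓ!) E^{ℓ,p}(1_{λ⊇μ} H(λ))`. -/
def Gfun (p q n : ℕ) (x : ℝ) : ℝ :=
  ∑' ℓ : ℕ,
    if p * (n - p) ≤ ℓ then
      ((p : ℝ) * x) ^ ℓ / (Nat.factorial ℓ : ℝ) *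
        Eword ℓ p (fun lam => indSup n p lam * (Hstrip n p q lam : ℝ))
    else 0

/-!
Encode a diagram with at most `p` rows by its shifted row lengths. The hook length and tableau
counts turn its contribution to `G` into a squared Vandermonde determinant times a product of
one-particle weights `(k + q - p)! / ((k + n - p)! k!)`. By Andréief's identity, `G x` is therefore,
up to a constant, `x ^ (p * (n - p))` times the Wronskian `W` of `p` confluent hypergeometric
functions, which solve Kummer's equation and are linked by a raising operator. Hence
`u = p * (n - p) - p * x + x * W' / W`, which is analytic at `0` because `W 0 ≠ 0`.

The operator `f ↦ Wr(F₀, …, F_{p-1}, f) / W` factors as `(D - s_{p-1}) ⋯ (D - s₀)`. Its coefficients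
of order `p - 1`, `p - 2`, `p - 3` satisfy differential relations, obtained by induction on `p` from
the Riccati and Toda equations for the `s_j`. The first of them is `-W' / W`, and eliminating the
other two leaves the third order equation for `u`. At `x = 0` that equation determines `u' 0`.
-/

section DarbouxChain

variable {R A : Type*} [CommRing R] [CommRing A] [Algebra R A] (D : Derivation R A A) (f : ℕ → A)

lemma derivation_ofNat (n : ℕ) [n.AtLeastTwo] : D ofNat(n) = 0 := by
  rw [← Nat.cast_ofNat, D.map_natCast]

/-- The Darboux chain of the sequence `f` with respect to the derivation `D`: the `N`-th row is
obtained by applying `(D - s_{N-1}) ⋯ (D - s_0)`, where `s_N` is the logarithmic derivative of the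
diagonal entry `darboux D f N N`. `Ring.inverse` keeps the definition total; it is only meaningful
when the diagonal entries are units. -/
def darboux : ℕ → ℕ → A
  | 0, m => f m
  | N + 1, m =>
    D (darboux N m) - D (darboux N N) * Ring.inverse (darboux N N) * darboux N m

/-- The logarithmic derivative `s_N` of the `N`-th diagonal entry of the Darboux chain. -/
def darbouxLog (N : ℕ) : A :=
  D (darboux D f N N) * Ring.inverse (darboux D f N N)

/-- `darbouxCoeff D f N k` is the coefficient of `D ^ (N - k)` in the monic differential operator
`(D - s_{N-1}) ⋯ (D - s_0)`. -/
def darbouxCoeff : ℕ → ℕ → A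
  | _, 0 => 1
  | 0, _ + 1 => 0
  | N + 1, k + 1 =>
    darbouxCoeff N (k + 1) + D (darbouxCoeff N k) - darbouxLog D f N * darbouxCoeff N k

local notation "ρ" => darboux D f
local notation "σ" => darbouxLog D f
local notation "κ" => darbouxCoeff D f

lemma darboux_zero (m : ℕ) : ρ 0 m = f m := rfl

lemma darboux_succ (N m : ℕ) : ρ (N + 1) m = D (ρ N m) - σ N * ρ N m := rfl

lemma darbouxCoeff_zero_right (N : ℕ) : κ N 0 = 1 := by cases N <;> rfl

lemma darbouxCoeff_zero_succ (k : ℕ) : κ 0 (k + 1) = 0 := rfl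

lemma darbouxCoeff_succ_succ (N k : ℕ) :
    κ (N + 1) (k + 1) = κ N (k + 1) + D (κ N k) - σ N * κ N k := by
  rw [darbouxCoeff]

lemma darbouxCoeff_succ_one (N : ℕ) : κ (N + 1) 1 = κ N 1 - σ N := by
  rw [darbouxCoeff_succ_succ, darbouxCoeff_zero_right, D.map_one_eq_zero, add_zero, mul_one]

lemma darbouxCoeff_eq_zero_of_lt {N k : ℕ} (h : N < k) : κ N k = 0 := by
  induction N generalizing k with
  | zero => obtain ⟨k, rfl⟩ := Nat.exists_eq_succ_of_ne_zero h.ne'; rfl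
  | succ N ih =>
    obtain ⟨k, rfl⟩ := Nat.exists_eq_succ_of_ne_zero (Nat.zero_lt_of_lt h).ne'
    rw [Nat.succ_eq_add_one, darbouxCoeff_succ_succ, ih (by omega), ih (by omega)]
    simp

variable {D f}

lemma derivation_darboux_diag {N : ℕ} (hN : IsUnit (ρ N N)) : D (ρ N N) = σ N * ρ N N := by
  rw [darbouxLog, mul_assoc, Ring.inverse_mul_cancel _ hN, mul_one]

lemma darboux_eq_zero_of_lt {N m : ℕ} (hm : m < N) (hu : ∀ n < N, IsUnit (ρ n n)) :
    ρ N m = 0 := by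
  induction N with
  | zero => omega
  | succ N ih =>
    rcases Nat.lt_succ_iff_lt_or_eq.1 hm with hlt | rfl
    · rw [darboux_succ, ih hlt fun n hn => hu n (by omega), map_zero, mul_zero, sub_zero]
    · rw [darboux_succ, derivation_darboux_diag (hu m (by omega)), sub_self]

end DarbouxChain

section WronskianMatrix

variable {R A : Type*} [CommRing R] [CommRing A] [Algebra R A] (D : Derivation R A A) (f : ℕ → A)

local notation "ρ" => darboux D f
local notation "κ" => darbouxCoeff D f

/-- The Wronskian matrix of `f 0, …, f (N - 1)`, with row `i` holding the `i`-th derivatives. -/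
def wronskianMatrix (N : ℕ) : Matrix (Fin N) (Fin N) A :=
  Matrix.of fun i j => D^[i] (f j)

lemma darboux_eq_sum_darbouxCoeff (N m : ℕ) :
    ρ N m = ∑ k ∈ Finset.range (N + 1), κ N k * D^[N - k] (f m) := by
  induction N with
  | zero => simp [darboux_zero, darbouxCoeff_zero_right]
  | succ N ih =>
    have hD : D (ρ N m) = ∑ k ∈ Finset.range (N + 1), κ N k * D^[N + 1 - k] (f m)
        + ∑ k ∈ Finset.range (N + 1), D (κ N k) * D^[N - k] (f m) := by
      rw [ih, map_sum, ← Finset.sum_add_distrib]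
      refine Finset.sum_congr rfl fun k hk => ?_
      rw [Derivation.leibniz, Nat.succ_sub (Finset.mem_range_succ_iff.1 hk),
        Function.iterate_succ_apply', smul_eq_mul, smul_eq_mul, mul_comm (D^[N - k] _)]
    have hshift : ∑ k ∈ Finset.range (N + 1), κ N k * D^[N + 1 - k] (f m)
        = ∑ k ∈ Finset.range (N + 1), κ N (k + 1) * D^[N - k] (f m) + D^[N + 1] (f m) := by
      rw [Finset.sum_range_succ', Finset.sum_range_succ _ N,
        darbouxCoeff_eq_zero_of_lt D f N.lt_succ_self, darbouxCoeff_zero_right]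
      simp [Nat.succ_sub_succ]
    rw [darboux_succ, hD, hshift, Finset.sum_range_succ' _ (N + 1), ih, Finset.mul_sum,
      darbouxCoeff_zero_right]
    simp only [darbouxCoeff_succ_succ, Nat.succ_sub_succ, sub_mul, add_mul,
      Finset.sum_add_distrib, Finset.sum_sub_distrib, mul_assoc]
    simp only [one_mul, Nat.sub_zero]
    ring

variable {f}

lemma det_wronskianMatrix {N : ℕ} (hu : ∀ n, n + 1 < N → IsUnit (ρ n n)) :
    (wronskianMatrix D f N).det = ∏ n ∈ Finset.range N, ρ n n := by
  let U : Matrix (Fin N) (Fin N) A :=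
    Matrix.of fun i j => if j ≤ i then κ i (i - j : ℕ) else 0
  have hU : U.det = 1 := by
    rw [Matrix.det_of_isLowerTriangular U fun i j hij => if_neg (not_le.2 hij)]
    simp [U, darbouxCoeff_zero_right]
  have hmul : U * wronskianMatrix D f N = Matrix.of fun i j : Fin N => ρ i j := by
    ext i j
    have hrange : Finset.range (i + 1) = (Finset.range N).filter (· ≤ (i : ℕ)) := by
      ext k; simp only [Finset.mem_range, Finset.mem_filter]; omega
    rw [Matrix.of_apply, darboux_eq_sum_darbouxCoeff, ← Finset.sum_range_reflect, hrange,
      Finset.sum_filter, Finset.sum_range, Matrix.mul_apply]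
    refine Finset.sum_congr rfl fun k _ => ?_
    by_cases hk : k ≤ i
    · simp [U, wronskianMatrix, hk, Nat.sub_sub_self (Fin.le_def.1 hk)]
    · simp [U, wronskianMatrix, hk]
  rw [← one_mul (wronskianMatrix D f N).det, ← hU, ← Matrix.det_mul, hmul,
    Matrix.det_of_isUpperTriangular]
  · simp [Finset.prod_range]
  · intro i j hij
    exact darboux_eq_zero_of_lt (by simpa using hij) fun n hn => hu n (by omega)

lemma isUnit_darboux_diag {N : ℕ} (hW : ∀ n ≤ N, IsUnit (wronskianMatrix D f n).det) :
    ∀ n < N, IsUnit (ρ n n) := by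
  intro n
  induction n using Nat.strong_induction_on with
  | _ n ih =>
    intro hn
    have hdet := hW (n + 1) hn
    rw [det_wronskianMatrix D fun k hk => ih k (by omega) (by omega),
      Finset.prod_range_succ] at hdet
    exact isUnit_of_mul_isUnit_right hdet

lemma derivation_prod_darboux_diag {N : ℕ} (hu : ∀ n < N, IsUnit (ρ n n)) :
    D (∏ n ∈ Finset.range N, ρ n n) = -κ N 1 * ∏ n ∈ Finset.range N, ρ n n := by
  induction N with
  | zero => simp [darbouxCoeff_zero_succ]
  | succ N ih =>
    rw [Finset.prod_range_succ, Derivation.leibniz, ih fun n hn => hu n (by omega),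
      derivation_darboux_diag (hu N (by omega)), darbouxCoeff_succ_one, smul_eq_mul, smul_eq_mul]
    ring

end WronskianMatrix

/-- A sequence `f` of solutions of Kummer's equations `x f'' + (b - x) f' = (a + j) f` in a
differential ring, connected by the raising operator `x D + (a + j)`. -/
structure IsKummerLadder {R A : Type*} [CommRing R] [CommRing A] [Algebra R A]
    (D : Derivation R A A) (x a b : A) (f : ℕ → A) : Prop where
  derivation_x : D x = 1
  derivation_a : D a = 0
  derivation_b : D b = 0
  kummer (j : ℕ) : x * D (D (f j)) + (b - x) * D (f j) = (a + j) * f j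
  raise (j : ℕ) : f (j + 1) = x * D (f j) + (a + j) * f j

section KummerLadder

variable {R A : Type*} [CommRing R] [CommRing A] [Algebra R A] {D : Derivation R A A} {x a b : A}
  {f : ℕ → A} {N : ℕ}

local notation "ρ" => darboux D f
local notation "σ" => darbouxLog D f
local notation "κ" => darbouxCoeff D f

lemma riccati_of_diag (hN : IsUnit (ρ N N))
    (hdiag : x * D (D (ρ N N)) + (b - x + N) * D (ρ N N)
      + (-N - κ N 1 - 2 * x * D (κ N 1)) * ρ N N = (a + N) * ρ N N) :
    x * (D (σ N) + σ N ^ 2) + (b - x + N) * σ N - N - κ N 1 - 2 * x * D (κ N 1) - (a + N) = 0 := by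
  have hD := derivation_darboux_diag hN
  have hDD : D (D (ρ N N)) = (D (σ N) + σ N ^ 2) * ρ N N := by
    rw [hD, Derivation.leibniz, hD, smul_eq_mul, smul_eq_mul]; ring
  rw [hDD, hD] at hdiag
  exact hN.mul_left_eq_zero.1 (by linear_combination hdiag)

namespace IsKummerLadder

lemma kummer_darboux (h : IsKummerLadder D x a b f) (hu : ∀ n < N, IsUnit (ρ n n)) (m : ℕ) :
    x * D (D (ρ N m)) + (b - x + N) * D (ρ N m)
      + (-N - κ N 1 - 2 * x * D (κ N 1)) * ρ N m = (a + m) * ρ N m := by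
  induction N generalizing m with
  | zero =>
    simp only [darboux_zero, darbouxCoeff_zero_succ, map_zero, Nat.cast_zero]
    linear_combination h.kummer m
  | succ N ih =>
    have ih := ih fun n hn => hu n (by omega)
    have hric := congrArg D (riccati_of_diag (hu N (by omega)) (ih N))
    have hm := ih m
    have hDm := congrArg D hm
    simp only [darboux_succ, darbouxCoeff_succ_one]
    simp only [map_add, map_sub, map_neg, map_zero, Derivation.leibniz, smul_eq_mul, pow_two,
      h.derivation_x, h.derivation_a, h.derivation_b, Derivation.map_natCast, derivation_ofNat,
      Nat.cast_add, Nat.cast_one] at hric hDm ⊢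
    linear_combination hDm - σ N * hm - ρ N m * hric

lemma riccati (h : IsKummerLadder D x a b f) (hu : ∀ n ≤ N, IsUnit (ρ n n)) :
    x * (D (σ N) + σ N ^ 2) + (b - x + N) * σ N - N - κ N 1 - 2 * x * D (κ N 1) - (a + N) = 0 :=
  riccati_of_diag (hu N le_rfl) (h.kummer_darboux (fun n hn => hu n hn.le) N)

lemma derivation_riccati (h : IsKummerLadder D x a b f) (hu : ∀ n ≤ N, IsUnit (ρ n n)) :
    x * (D (D (σ N)) + 2 * σ N * D (σ N)) + (D (σ N) + σ N ^ 2) + (b - x + N) * D (σ N) - σ N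
      - 3 * D (κ N 1) - 2 * x * D (D (κ N 1)) = 0 := by
  have hric := congrArg D (h.riccati hu)
  simp only [map_add, map_sub, map_zero, Derivation.leibniz, smul_eq_mul, pow_two,
    h.derivation_x, h.derivation_a, h.derivation_b, Derivation.map_natCast,
    derivation_ofNat] at hric
  linear_combination hric

lemma raise_darboux_defect_succ (h : IsKummerLadder D x a b f) (hu : ∀ n ≤ N, IsUnit (ρ n n))
    {m : ℕ} {r : A}
    (hr : ρ N (m + 1) - (x * D (D (ρ N m)) + (b + N) * D (ρ N m)
      - (κ N 1 + 2 * x * D (κ N 1)) * ρ N m) = r) :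
    ρ (N + 1) (m + 1) - (x * D (D (ρ (N + 1) m)) + (b + (N + 1)) * D (ρ (N + 1) m)
      - (κ (N + 1) 1 + 2 * x * D (κ (N + 1) 1)) * ρ (N + 1) m)
    = D r - σ N * r + (D (x * κ N 1) - D (x * κ (N + 1) 1)) * ρ N m := by
  subst hr
  have hric := h.derivation_riccati hu
  simp only [darboux_succ, darbouxCoeff_succ_one, map_add, map_sub, Derivation.leibniz,
    smul_eq_mul, h.derivation_x, h.derivation_b, Derivation.map_natCast, derivation_ofNat]
  linear_combination ρ N m * hric

lemma toda_of_raise_diag (hu : ∀ n ≤ N + 1, IsUnit (ρ n n))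
    (hraise : ρ (N + 1) (N + 1) - (x * D (D (ρ (N + 1) N)) + (b + (N + 1)) * D (ρ (N + 1) N)
      - (κ (N + 1) 1 + 2 * x * D (κ (N + 1) 1)) * ρ (N + 1) N) = -D (x * κ (N + 1) 1) * ρ N N) :
    D (D (x * κ (N + 1) 1)) = D (x * κ (N + 1) 1) * (σ (N + 1) - σ N) := by
  have hN := hu N (by omega)
  have hdiag : ρ (N + 1) (N + 1) = -D (x * κ (N + 1) 1) * ρ N N := by
    rw [darboux_eq_zero_of_lt N.lt_succ_self fun n hn => hu n (by omega)] at hraise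
    simpa using hraise
  have hD := congrArg D hdiag
  rw [derivation_darboux_diag (hu _ le_rfl), hdiag, Derivation.leibniz _ (-D _),
    derivation_darboux_diag hN, map_neg, smul_eq_mul, smul_eq_mul] at hD
  exact sub_eq_zero.1 (hN.mul_left_eq_zero.1 (by linear_combination hD))

lemma raise_darboux (h : IsKummerLadder D x a b f) (hu : ∀ n ≤ N, IsUnit (ρ n n)) (m : ℕ) :
    ρ (N + 1) (m + 1) - (x * D (D (ρ (N + 1) m)) + (b + (N + 1)) * D (ρ (N + 1) m)
      - (κ (N + 1) 1 + 2 * x * D (κ (N + 1) 1)) * ρ (N + 1) m) = -D (x * κ (N + 1) 1) * ρ N m := by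
  induction N generalizing m with
  | zero =>
    have hzero : ρ 0 (m + 1) - (x * D (D (ρ 0 m)) + (b + (0 : ℕ)) * D (ρ 0 m)
        - (κ 0 1 + 2 * x * D (κ 0 1)) * ρ 0 m) = 0 := by
      simp only [darboux_zero, darbouxCoeff_zero_succ, map_zero, Nat.cast_zero, h.raise]
      linear_combination -h.kummer m
    simpa [darbouxCoeff_zero_succ] using h.raise_darboux_defect_succ hu hzero
  | succ N ih =>
    have ih := ih fun n hn => hu n (by omega)
    have htoda := toda_of_raise_diag hu (ih N)
    have hstep := h.raise_darboux_defect_succ hu (m := m) (by rw [Nat.cast_succ, ih m])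
    rw [hstep, Derivation.leibniz _ (-D _), map_neg, htoda, darboux_succ D f N m,
      smul_eq_mul, smul_eq_mul]
    ring

lemma toda (h : IsKummerLadder D x a b f) (hu : ∀ n ≤ N + 1, IsUnit (ρ n n)) :
    D (D (x * κ (N + 1) 1)) = D (x * κ (N + 1) 1) * (σ (N + 1) - σ N) :=
  toda_of_raise_diag hu (h.raise_darboux (fun n hn => hu n (by omega)) N)

lemma darbouxCoeff_two_of_toda (h : IsKummerLadder D x a b f) (hu : ∀ n ≤ N, IsUnit (ρ n n)) :
    x * D (κ N 2) + 2 * κ N 2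
      = D (x * κ N 1) * κ N 1 - D (D (x * κ N 1)) + σ N * D (x * κ N 1) := by
  induction N with
  | zero => simp [darbouxCoeff_zero_succ]
  | succ N ih =>
    have ih := ih fun n hn => hu n (by omega)
    rw [h.toda hu]
    simp only [darbouxCoeff_succ_one, darbouxCoeff_succ_succ _ _ N 1, map_add, map_sub,
      Derivation.leibniz, smul_eq_mul, h.derivation_x, D.map_one_eq_zero] at ih ⊢
    linear_combination ih

lemma darbouxCoeff_two (h : IsKummerLadder D x a b f) (hu : ∀ n < N, IsUnit (ρ n n)) :
    x * (κ N 1 ^ 2 - D (κ N 1) - 2 * κ N 2) - (b - x + N - 1) * κ N 1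
      - (N * a + N * (N - 1)) = 0 := by
  induction N with
  | zero => simp [darbouxCoeff_zero_succ]
  | succ N ih =>
    have ih := ih fun n hn => hu n (by omega)
    have hric := h.riccati (N := N) fun n hn => hu n (by omega)
    simp only [darbouxCoeff_succ_one, darbouxCoeff_succ_succ _ _ N 1, map_sub, Nat.cast_add,
      Nat.cast_one]
    linear_combination ih + hric

lemma derivation_darbouxCoeff_two (h : IsKummerLadder D x a b f)
    (hu : ∀ n < N, IsUnit (ρ n n)) :
    (κ N 1 ^ 2 - D (κ N 1) - 2 * κ N 2)
      + x * (2 * κ N 1 * D (κ N 1) - D (D (κ N 1)) - 2 * D (κ N 2)) + κ N 1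
      - (b - x + N - 1) * D (κ N 1) = 0 := by
  have hD := congrArg D (h.darbouxCoeff_two hu)
  simp only [map_add, map_sub, map_zero, Derivation.leibniz, smul_eq_mul, pow_two,
    h.derivation_x, h.derivation_a, h.derivation_b, Derivation.map_natCast,
    D.map_one_eq_zero, derivation_ofNat] at hD
  linear_combination hD

lemma derivation_derivation_darbouxCoeff_two (h : IsKummerLadder D x a b f)
    (hu : ∀ n < N, IsUnit (ρ n n)) :
    2 * (2 * κ N 1 * D (κ N 1) - D (D (κ N 1)) - 2 * D (κ N 2))
      + x * (2 * κ N 1 * D (D (κ N 1)) + 2 * D (κ N 1) ^ 2 - D (D (D (κ N 1)))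
        - 2 * D (D (κ N 2)))
      + 2 * D (κ N 1) - (b - x + N - 1) * D (D (κ N 1)) = 0 := by
  have hD := congrArg D (h.derivation_darbouxCoeff_two hu)
  simp only [map_add, map_sub, map_zero, Derivation.leibniz, smul_eq_mul, pow_two,
    h.derivation_x, h.derivation_b, Derivation.map_natCast, D.map_one_eq_zero,
    derivation_ofNat] at hD
  linear_combination hD

lemma derivation_darbouxCoeff_three (h : IsKummerLadder D x a b f)
    (hu : ∀ n < N, IsUnit (ρ n n)) :
    2 * κ N 2 - 3 * κ N 3 - x * D (D (κ N 2)) - 2 * x * D (κ N 3) - (b - x + N) * D (κ N 2)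
      + κ N 1 * κ N 2 + 2 * x * D (κ N 1) * κ N 2 = 0 := by
  induction N with
  | zero => simp [darbouxCoeff_zero_succ]
  | succ N ih =>
    have hu' : ∀ n < N, IsUnit (ρ n n) := fun n hn => hu n (by omega)
    have ih := ih hu'
    have hric := h.derivation_riccati (N := N) fun n hn => hu n (by omega)
    have hD := h.derivation_darbouxCoeff_two hu'
    have hDD := h.derivation_derivation_darbouxCoeff_two hu'
    simp only [darbouxCoeff_succ_one, darbouxCoeff_succ_succ _ _ N 1,
      darbouxCoeff_succ_succ _ _ N 2, Nat.reduceAdd, map_add, map_sub, Derivation.leibniz,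
      smul_eq_mul, Nat.cast_add, Nat.cast_one]
    linear_combination ih + hDD - σ N * hD + κ N 1 * hric

lemma darbouxCoeff_three (h : IsKummerLadder D x a b f) (hu : ∀ n < N, IsUnit (ρ n n)) :
    x ^ 2 * (3 * κ N 1 * D (κ N 1) - D (D (κ N 1)) - 3 * D (κ N 2) - 3 * κ N 3
        + 3 * κ N 1 * κ N 2 - κ N 1 ^ 3)
      + x * (1 + b - x) * (κ N 1 ^ 2 - D (κ N 1) - 2 * κ N 2)
      + 2 * x * ((N - 1) * (κ N 1 ^ 2 - D (κ N 1) - κ N 2) - (N - 2) * κ N 2)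
      - ((N - 1) * (b + N - 1 - x) - N * x) * κ N 1
      - (a + N - 1) * (N * a + N * (N - 1) - x * κ N 1) + N * a ^ 2 + a * N * (N - 1) = 0 := by
  induction N with
  | zero => simp [darbouxCoeff_zero_succ]
  | succ N ih =>
    have hu' : ∀ n < N, IsUnit (ρ n n) := fun n hn => hu n (by omega)
    have hu'' : ∀ n ≤ N, IsUnit (ρ n n) := fun n hn => hu n (by omega)
    have ih := ih hu'
    have hric := h.riccati hu''
    have hDric := h.derivation_riccati hu''
    have htwo := h.darbouxCoeff_two hu'
    have hDtwo := h.derivation_darbouxCoeff_two hu'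
    have htoda := h.darbouxCoeff_two_of_toda hu''
    simp only [darbouxCoeff_succ_one, darbouxCoeff_succ_succ _ _ N 1,
      darbouxCoeff_succ_succ _ _ N 2, Nat.reduceAdd, map_add, map_sub, Derivation.leibniz,
      smul_eq_mul, h.derivation_x, D.map_one_eq_zero, Nat.cast_add, Nat.cast_one] at htoda ⊢
    linear_combination ih + x * htoda + x * hDric + (x * σ N + N) * hric + htwo + 2 * x * hDtwo

/-- Eliminating the second and third coefficients of the Darboux operator leaves a third order
equation for the first one. -/
lemma painleve_of_darboux {n q u : A} (h : IsKummerLadder D x (q - N + 1) (n - N + 1) f)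
    (hu : ∀ k < N, IsUnit (ρ k k)) (hdef : u = N * (n - N) - N * x - x * κ N 1) :
    x ^ 2 * D (D (D u)) + x * D (D u) + 6 * x * (D u) ^ 2 - 4 * u * D u
      + (-x ^ 2 + 2 * (n + 2 * (N - q)) * x - (n - 2 * N) ^ 2) * D u
      - (-x + (n + 2 * (N - q))) * u + N * (N - q) * (x + n - 2 * N) = 0 := by
  have hDn : D n = 0 := by simpa using h.derivation_b
  have hDq : D q = 0 := by simpa using h.derivation_a
  have htwo := h.darbouxCoeff_two hu
  have hDtwo := h.derivation_darbouxCoeff_two hu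
  have hDDtwo := h.derivation_derivation_darbouxCoeff_two hu
  have hthree := h.darbouxCoeff_three hu
  have hDthree := congrArg D hthree
  have hDthree' := h.derivation_darbouxCoeff_three hu
  have hDu : D u = -N - κ N 1 - x * D (κ N 1) := by
    rw [hdef]
    simp only [map_sub, Derivation.leibniz, smul_eq_mul, h.derivation_x, hDn,
      Derivation.map_natCast]
    ring
  have hDDu : D (D u) = -2 * D (κ N 1) - x * D (D (κ N 1)) := by
    rw [hDu]
    simp only [map_sub, map_neg, Derivation.leibniz, smul_eq_mul, h.derivation_x,
      Derivation.map_natCast]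
    ring
  have hDDDu : D (D (D u)) = -3 * D (D (κ N 1)) - x * D (D (D (κ N 1))) := by
    rw [hDDu]
    simp only [map_sub, map_neg, Derivation.leibniz, smul_eq_mul, h.derivation_x,
      derivation_ofNat]
    ring
  simp only [map_add, map_sub, map_zero, Derivation.leibniz, smul_eq_mul, pow_succ,
    pow_zero, one_mul, h.derivation_x, hDn, hDq, Derivation.map_natCast, D.map_one_eq_zero,
    derivation_ofNat] at hDthree
  rw [hDDDu, hDDu, hDu, hdef]
  linear_combination -6 * x ^ 2 * hDthree' - 2 * hthree + 4 * x * hDthree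
    + (-x - 1 - (n - N + 1) + N) * htwo
    + (-x * ((n - N + 1) - x) - 5 * x * N + 5 * x + 6 * x ^ 2 * κ N 1) * hDtwo
    - 3 * x ^ 2 * hDDtwo

theorem painleve_of_wronskian {n q u : A} (h : IsKummerLadder D x (q - N + 1) (n - N + 1) f)
    (hW : ∀ k ≤ N, IsUnit (wronskianMatrix D f k).det)
    (hdef : u * (wronskianMatrix D f N).det = (N * (n - N) - N * x) * (wronskianMatrix D f N).det
      + x * D (wronskianMatrix D f N).det) :
    x ^ 2 * D (D (D u)) + x * D (D u) + 6 * x * (D u) ^ 2 - 4 * u * D u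
      + (-x ^ 2 + 2 * (n + 2 * (N - q)) * x - (n - 2 * N) ^ 2) * D u
      - (-x + (n + 2 * (N - q))) * u + N * (N - q) * (x + n - 2 * N) = 0 := by
  have hu := isUnit_darboux_diag D hW
  refine h.painleve_of_darboux hu ((hW N le_rfl).mul_right_cancel ?_)
  rw [hdef, det_wronskianMatrix D fun n hn => hu n (by omega), derivation_prod_darboux_diag D hu]
  ring

end IsKummerLadder

end KummerLadder

section AnalyticGerm

variable {𝕜 : Type*} [NontriviallyNormedField 𝕜]

/-- The ring of germs at `z` of functions analytic at `z`. -/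
def analyticGerm (z : 𝕜) : Subring (Germ (𝓝 z) 𝕜) where
  carrier := {g | ∃ f : 𝕜 → 𝕜, AnalyticAt 𝕜 f z ∧ (f : Germ (𝓝 z) 𝕜) = g}
  mul_mem' := by
    rintro _ _ ⟨f, hf, rfl⟩ ⟨g, hg, rfl⟩
    exact ⟨f * g, hf.mul hg, rfl⟩
  one_mem' := ⟨1, analyticAt_const, rfl⟩
  add_mem' := by
    rintro _ _ ⟨f, hf, rfl⟩ ⟨g, hg, rfl⟩
    exact ⟨f + g, hf.add hg, rfl⟩
  zero_mem' := ⟨0, analyticAt_const, rfl⟩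
  neg_mem' := by
    rintro _ ⟨f, hf, rfl⟩
    exact ⟨-f, hf.neg, rfl⟩

namespace analyticGerm

variable {z : 𝕜} {f g : 𝕜 → 𝕜}

/-- The germ at `z` of a function analytic at `z`. -/
def of (hf : AnalyticAt 𝕜 f z) : analyticGerm z := ⟨f, f, hf, rfl⟩

lemma coe_of (hf : AnalyticAt 𝕜 f z) : (of hf : Germ (𝓝 z) 𝕜) = f := rfl

lemma exists_eq_of (s : analyticGerm z) : ∃ (f : 𝕜 → 𝕜) (hf : AnalyticAt 𝕜 f z), s = of hf := by
  obtain ⟨_, f, hf, rfl⟩ := s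
  exact ⟨f, hf, rfl⟩

lemma of_eq_of_iff (hf : AnalyticAt 𝕜 f z) (hg : AnalyticAt 𝕜 g z) :
    of hf = of hg ↔ f =ᶠ[𝓝 z] g :=
  Subtype.ext_iff.trans Germ.coe_eq

lemma isUnit_of (hf : AnalyticAt 𝕜 f z) (hz : f z ≠ 0) : IsUnit (of hf) := by
  refine IsUnit.of_mul_eq_one (of (hf.inv hz)) ?_
  refine (of_eq_of_iff (hf.mul (hf.inv hz)) analyticAt_const).2 ?_
  filter_upwards [hf.continuousAt.eventually_ne hz] with x hx
  exact mul_inv_cancel₀ hx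

variable [CompleteSpace 𝕜]

/-- Differentiation of analytic germs. -/
def derivation (z : 𝕜) : Derivation ℤ (analyticGerm z) (analyticGerm z) :=
  Derivation.mk'
    (AddMonoidHom.toIntLinearMap
      { toFun s := ⟨Germ.map' deriv (fun _ _ h => h.deriv) s, by
          obtain ⟨f, hf, rfl⟩ := exists_eq_of s
          exact ⟨deriv f, hf.deriv, rfl⟩⟩
        map_zero' := (of_eq_of_iff (analyticAt_const (v := (0 : 𝕜))).deriv analyticAt_const).2
          (by simp)
        map_add' s t := by
          obtain ⟨f, hf, rfl⟩ := exists_eq_of s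
          obtain ⟨g, hg, rfl⟩ := exists_eq_of t
          refine (of_eq_of_iff (hf.add hg).deriv (hf.deriv.add hg.deriv)).2 ?_
          filter_upwards [hf.eventually_analyticAt, hg.eventually_analyticAt] with x hfx hgx
          exact deriv_add hfx.differentiableAt hgx.differentiableAt })
    fun s t => by
      obtain ⟨f, hf, rfl⟩ := exists_eq_of s
      obtain ⟨g, hg, rfl⟩ := exists_eq_of t
      refine (of_eq_of_iff (hf.mul hg).deriv
        ((hf.mul hg.deriv).add (hg.mul hf.deriv))).2 ?_
      filter_upwards [hf.eventually_analyticAt, hg.eventually_analyticAt] with x hfx hgx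
      rw [deriv_mul hfx.differentiableAt hgx.differentiableAt]
      simp only [Pi.add_apply, Pi.mul_apply]
      ring

lemma derivation_of (hf : AnalyticAt 𝕜 f z) : derivation z (of hf) = of hf.deriv := rfl

lemma derivation_iterate_of (hf : AnalyticAt 𝕜 f z) (i : ℕ) :
    ((derivation z)^[i] (of hf) : Germ (𝓝 z) 𝕜) = iteratedDeriv i f := by
  induction i generalizing f with
  | zero => rw [iteratedDeriv_zero]; rfl
  | succ i ih => rw [Function.iterate_succ_apply, derivation_of, ih, iteratedDeriv_succ']

end analyticGerm

/-- The Wronskian determinant of `F 0, …, F (N - 1)`. -/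
def wronskian (F : ℕ → 𝕜 → 𝕜) (N : ℕ) (x : 𝕜) : 𝕜 :=
  (Matrix.of fun i j : Fin N => iteratedDeriv i (F j) x).det

variable [CompleteSpace 𝕜] {F : ℕ → 𝕜 → 𝕜} {z : 𝕜}

lemma analyticAt_wronskian (hF : ∀ j, AnalyticAt 𝕜 (F j) z) (N : ℕ) :
    AnalyticAt 𝕜 (wronskian F N) z := by
  unfold wronskian
  simp only [Matrix.det_apply', Matrix.of_apply, iteratedDeriv_eq_iterate]
  exact Finset.analyticAt_fun_sum _ fun σ _ => analyticAt_const.mul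
    (Finset.analyticAt_fun_prod _ fun i _ => (hF i).iterated_deriv (σ i))

lemma det_wronskianMatrix_analyticGerm (hF : ∀ j, AnalyticAt 𝕜 (F j) z) (N : ℕ) :
    (wronskianMatrix (analyticGerm.derivation z) (fun j => analyticGerm.of (hF j)) N).det
      = analyticGerm.of (analyticAt_wronskian hF N) := by
  have hfun : wronskian F N = (Matrix.of fun i j : Fin N => iteratedDeriv i (F j)).det := by
    ext x
    exact (RingHom.map_det (Pi.evalRingHom (fun _ : 𝕜 => 𝕜) x)
      (Matrix.of fun i j : Fin N => iteratedDeriv i (F j))).symm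
  apply Subtype.ext
  rw [analyticGerm.coe_of, hfun]
  change (analyticGerm z).subtype _ = Germ.coeRingHom (𝓝 z) _
  rw [RingHom.map_det, RingHom.map_det]
  congr 1
  ext i j
  exact analyticGerm.derivation_iterate_of (hF j) i

theorem eventually_painleve_of_kummer {N : ℕ} {q n : 𝕜} {v : 𝕜 → 𝕜}
    (hF : ∀ j, AnalyticAt 𝕜 (F j) z)
    (hkummer : ∀ j, ∀ᶠ x in 𝓝 z, x * deriv (deriv (F j)) x + (n - N + 1 - x) * deriv (F j) x
      = (q - N + 1 + j) * F j x)
    (hraise : ∀ j, ∀ᶠ x in 𝓝 z, F (j + 1) x = x * deriv (F j) x + (q - N + 1 + j) * F j x)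
    (hW : ∀ k ≤ N, wronskian F k z ≠ 0) (hv : AnalyticAt 𝕜 v z)
    (hdef : ∀ᶠ x in 𝓝 z, v x * wronskian F N x
      = (N * (n - N) - N * x) * wronskian F N x + x * deriv (wronskian F N) x) :
    ∀ᶠ x in 𝓝 z, x ^ 2 * deriv (deriv (deriv v)) x + x * deriv (deriv v) x
      + 6 * x * deriv v x ^ 2 - 4 * v x * deriv v x
      + (-x ^ 2 + 2 * (n + 2 * (N - q)) * x - (n - 2 * N) ^ 2) * deriv v x
      - (-x + (n + 2 * (N - q))) * v x + N * (N - q) * (x + n - 2 * N) = 0 := by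
  let X : analyticGerm z := analyticGerm.of analyticAt_id
  let C (c : 𝕜) : analyticGerm z := analyticGerm.of (analyticAt_const (v := c))
  have hC (c : 𝕜) : analyticGerm.derivation z (C c) = 0 :=
    Subtype.ext (Germ.coe_eq.2 (.of_eq (deriv_const' c)))
  have hladder : IsKummerLadder (analyticGerm.derivation z) X (C q - N + 1) (C n - N + 1)
      fun j => analyticGerm.of (hF j) :=
    { derivation_x := Subtype.ext (Germ.coe_eq.2 (.of_eq deriv_id''))
      derivation_a := by simp [hC]
      derivation_b := by simp [hC]
      kummer j := Subtype.ext (Germ.coe_eq.2 (hkummer j))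
      raise j := Subtype.ext (Germ.coe_eq.2 (hraise j)) }
  have hode := hladder.painleve_of_wronskian (u := analyticGerm.of hv)
    (fun k hk => by
      rw [det_wronskianMatrix_analyticGerm]
      exact analyticGerm.isUnit_of _ (hW k hk))
    (by
      rw [det_wronskianMatrix_analyticGerm]
      exact Subtype.ext (Germ.coe_eq.2 hdef))
  exact Germ.coe_eq.1 (Subtype.ext_iff.1 hode)

end AnalyticGerm

section EntireSeries

variable {𝕜 : Type*} [RCLike 𝕜] {c d : ℕ → 𝕜}

/-- `c` is the coefficient sequence of an everywhere convergent power series. -/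
def IsEntireSeq (c : ℕ → 𝕜) : Prop := ∀ r : ℝ, 0 ≤ r → Summable fun k => ‖c k‖ * r ^ k

/-- The sum of the power series with coefficients `c`; meaningful when `IsEntireSeq c`. -/
def entireSum (c : ℕ → 𝕜) (x : 𝕜) : 𝕜 := ∑' k, c k * x ^ k

/-- The coefficients of the formal derivative of the power series with coefficients `c`. -/
def derivCoeff (c : ℕ → 𝕜) (k : ℕ) : 𝕜 := (k + 1) * c (k + 1)

lemma derivCoeff_iterate (c : ℕ → 𝕜) (i k : ℕ) :
    derivCoeff^[i] c k = (k + i).descFactorial i * c (k + i) := by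
  induction i generalizing k with
  | zero => simp
  | succ i ih =>
    rw [Function.iterate_succ_apply', derivCoeff, ih, Nat.descFactorial_succ,
      show k + 1 + i = k + (i + 1) by omega, show k + (i + 1) - i = k + 1 by omega]
    push_cast
    ring

namespace IsEntireSeq

lemma summable (h : IsEntireSeq c) (x : 𝕜) : Summable fun k => c k * x ^ k :=
  .of_norm ((h ‖x‖ (norm_nonneg x)).congr fun k => by rw [norm_mul, norm_pow])

lemma hasSum (h : IsEntireSeq c) (x : 𝕜) : HasSum (fun k => c k * x ^ k) (entireSum c x) :=
  (h.summable x).hasSum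

lemma mono (h : IsEntireSeq c) (hd : ∀ k, ‖d k‖ ≤ ‖c k‖) : IsEntireSeq d := fun r hr =>
  .of_nonneg_of_le (fun k => by positivity)
    (fun k => mul_le_mul_of_nonneg_right (hd k) (by positivity)) (h r hr)

lemma add (hc : IsEntireSeq c) (hd : IsEntireSeq d) : IsEntireSeq fun k => c k + d k := by
  refine fun r hr => .of_nonneg_of_le (fun k => by positivity) (fun k => ?_)
    ((hc r hr).add (hd r hr))
  rw [← add_mul]
  exact mul_le_mul_of_nonneg_right (norm_add_le _ _) (by positivity)

lemma const_mul (h : IsEntireSeq c) (a : 𝕜) : IsEntireSeq fun k => a * c k := fun r hr =>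
  ((h r hr).mul_left ‖a‖).congr fun k => by rw [norm_mul, mul_assoc]

lemma natCast_mul (h : IsEntireSeq c) : IsEntireSeq fun k => k * c k := by
  refine fun r hr => .of_nonneg_of_le (fun k => by positivity) (fun k => ?_)
    (h (2 * r) (by positivity))
  have hk : (k : ℝ) ≤ 2 ^ k := by exact_mod_cast Nat.lt_two_pow_self.le
  calc ‖(k : 𝕜) * c k‖ * r ^ k = k * (‖c k‖ * r ^ k) := by
        rw [norm_mul, RCLike.norm_natCast, mul_assoc]
    _ ≤ 2 ^ k * (‖c k‖ * r ^ k) := by gcongr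
    _ = ‖c k‖ * (2 * r) ^ k := by rw [mul_pow]; ring

lemma shift (h : IsEntireSeq c) : IsEntireSeq fun k => c (k + 1) := by
  refine fun r hr => .of_nonneg_of_le (fun k => by positivity) (fun k => ?_)
    ((summable_nat_add_iff 1).2 (h (r + 1) (by positivity)))
  have hpow : r ^ k ≤ (r + 1) ^ (k + 1) :=
    (pow_le_pow_left₀ hr (by linarith) k).trans
      (pow_le_pow_right₀ (by linarith) k.le_succ)
  gcongr

lemma derivCoeff (h : IsEntireSeq c) : IsEntireSeq (derivCoeff c) := by
  simpa [IsEntireSeq, _root_.derivCoeff] using h.natCast_mul.shift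

lemma derivCoeff_iterate (h : IsEntireSeq c) (i : ℕ) : IsEntireSeq (_root_.derivCoeff^[i] c) := by
  induction i with
  | zero => exact h
  | succ i ih => rw [Function.iterate_succ_apply']; exact ih.derivCoeff

lemma analyticAt (h : IsEntireSeq c) (x : 𝕜) : AnalyticAt 𝕜 (entireSum c) x := by
  let P : FormalMultilinearSeries 𝕜 𝕜 𝕜 := FormalMultilinearSeries.ofScalars 𝕜 c
  have hradius : P.radius = ⊤ := by
    refine P.radius_eq_top_of_summable_norm fun r => (h r r.2).congr fun k => ?_
    simp [P]
  have hsum : P.sum = entireSum c := by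
    ext y
    exact tsum_congr fun k => by simp [P, mul_comm]
  have hball := P.hasFPowerSeriesOnBall (by simp [hradius])
  rw [hsum, hradius] at hball
  exact hball.analyticAt_of_mem (by simp)

lemma hasSum_natCast_mul_pow_pred (h : IsEntireSeq c) (x : 𝕜) :
    HasSum (fun k : ℕ => c k * (k * x ^ (k - 1))) (entireSum (_root_.derivCoeff c) x) := by
  rw [← hasSum_nat_add_iff' 1]
  simpa [_root_.derivCoeff, mul_comm, mul_left_comm, mul_assoc] using h.derivCoeff.hasSum x

lemma hasDerivAt (h : IsEntireSeq c) (x : 𝕜) :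
    HasDerivAt (entireSum c) (entireSum (_root_.derivCoeff c) x) x := by
  have hr : 0 < ‖x‖ + 1 := by positivity
  have hbound : Summable fun k : ℕ => ‖c k‖ * (k * (‖x‖ + 1) ^ (k - 1)) := by
    rw [← summable_nat_add_iff 1]
    refine (h.derivCoeff _ hr.le).congr fun k => ?_
    simp only [_root_.derivCoeff, norm_mul, Nat.add_sub_cancel]
    rw [← Nat.cast_succ, RCLike.norm_natCast]
    ring
  rw [← (h.hasSum_natCast_mul_pow_pred x).tsum_eq]
  refine hasDerivAt_tsum_of_isPreconnected (g := fun k y => c k * y ^ k) hbound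
    Metric.isOpen_ball (Metric.isConnected_ball (x := (0 : 𝕜)) hr).isPreconnected
    (fun k y _ => (hasDerivAt_pow k y).const_mul (c k)) (fun k y hy => ?_)
    (Metric.mem_ball_self hr) (h.summable 0) (by simp)
  rw [norm_mul, norm_mul, norm_pow, RCLike.norm_natCast]
  have hy' : ‖y‖ ≤ ‖x‖ + 1 := (mem_ball_zero_iff.1 hy).le
  gcongr

lemma deriv_entireSum (h : IsEntireSeq c) :
    deriv (entireSum c) = entireSum (_root_.derivCoeff c) :=
  funext fun x => (h.hasDerivAt x).deriv

lemma iteratedDeriv_entireSum (h : IsEntireSeq c) (i : ℕ) :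
    iteratedDeriv i (entireSum c) = entireSum (_root_.derivCoeff^[i] c) := by
  induction i with
  | zero => rfl
  | succ i ih =>
    rw [iteratedDeriv_succ, ih, (h.derivCoeff_iterate i).deriv_entireSum,
      Function.iterate_succ_apply']

lemma iteratedDeriv_entireSum_zero (h : IsEntireSeq c) (i : ℕ) :
    iteratedDeriv i (entireSum c) 0 = i.factorial * c i := by
  rw [h.iteratedDeriv_entireSum, entireSum,
    tsum_eq_single 0 fun k hk => by rw [zero_pow hk, mul_zero], _root_.derivCoeff_iterate]
  simp [Nat.descFactorial_self]

lemma hasSum_iteratedDeriv (h : IsEntireSeq c) (i : ℕ) (x : 𝕜) :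
    HasSum (fun k => (k.descFactorial i : 𝕜) * (c k * x ^ k))
      (x ^ i * iteratedDeriv i (entireSum c) x) := by
  have hvanish : ∑ k ∈ Finset.range i, (k.descFactorial i : 𝕜) * (c k * x ^ k) = 0 :=
    Finset.sum_eq_zero fun k hk => by
      rw [Nat.descFactorial_of_lt (Finset.mem_range.1 hk), Nat.cast_zero, zero_mul]
  rw [← hasSum_nat_add_iff' i, hvanish, sub_zero, h.iteratedDeriv_entireSum]
  refine (((h.derivCoeff_iterate i).hasSum x).mul_left (x ^ i)).congr_fun fun k => ?_
  rw [_root_.derivCoeff_iterate]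
  ring

lemma hasSum_mul_deriv (h : IsEntireSeq c) (x : 𝕜) :
    HasSum (fun k => k * c k * x ^ k) (x * deriv (entireSum c) x) := by
  simpa [mul_assoc] using h.hasSum_iteratedDeriv 1 x

end IsEntireSeq

end EntireSeries

section KummerSeries

variable {α β : ℕ}

/-- The weight `(k + α)! / ((k + β)! k!)`: the power series with these coefficients is a multiple of
Kummer's function `₁F₁(α + 1; β + 1; x)`. -/
def kummerWeight (α β k : ℕ) : ℝ :=
  (k + α).factorial / ((k + β).factorial * k.factorial)

lemma kummerWeight_pos (α β k : ℕ) : 0 < kummerWeight α β k := by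
  unfold kummerWeight; positivity

lemma isEntireSeq_inv_factorial : IsEntireSeq fun k => ((k.factorial : ℝ))⁻¹ := fun r _ =>
  (Real.summable_pow_div_factorial r).congr fun k => by
    rw [Real.norm_of_nonneg (by positivity), div_eq_inv_mul]

lemma isEntireSeq_kummerWeight (h : α ≤ β) : IsEntireSeq (kummerWeight α β) := by
  refine isEntireSeq_inv_factorial.mono fun k => ?_
  rw [Real.norm_of_nonneg (kummerWeight_pos α β k).le, Real.norm_of_nonneg (by positivity),
    kummerWeight, div_mul_eq_div_div, div_eq_mul_inv]
  refine mul_le_of_le_one_left (by positivity) (div_le_one_of_le₀ ?_ (by positivity))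
  exact_mod_cast Nat.factorial_le (by omega)

/-- The coefficients `(k + α + 1) ⋯ (k + α + j) (k + α)! / ((k + β)! k!)` of the `j`-th function in
the ladder of Kummer functions. -/
def kummerCoeff (α β j k : ℕ) : ℝ := (k + α + 1).ascFactorial j * kummerWeight α β k

/-- The `j`-th function in the ladder of Kummer functions, a multiple of
`₁F₁(α + 1 + j; β + 1; x)`. -/
def kummerFun (α β j : ℕ) : ℝ → ℝ := entireSum (kummerCoeff α β j)

lemma kummerCoeff_succ_left (α β j k : ℕ) :
    kummerCoeff α β (j + 1) k = k * kummerCoeff α β j k + (α + 1 + j) * kummerCoeff α β j k := by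
  rw [kummerCoeff, kummerCoeff, Nat.ascFactorial_succ]
  push_cast
  ring

lemma isEntireSeq_kummerCoeff (h : α ≤ β) (j : ℕ) : IsEntireSeq (kummerCoeff α β j) := by
  induction j with
  | zero => simpa [IsEntireSeq, kummerCoeff] using isEntireSeq_kummerWeight h
  | succ j ih =>
    rw [funext (kummerCoeff_succ_left α β j)]
    exact ih.natCast_mul.add (ih.const_mul _)

lemma kummerFun_succ (h : α ≤ β) (j : ℕ) (x : ℝ) :
    kummerFun α β (j + 1) x = x * deriv (kummerFun α β j) x + (α + 1 + j) * kummerFun α β j x := by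
  have hj := isEntireSeq_kummerCoeff h j
  refine ((isEntireSeq_kummerCoeff h (j + 1)).hasSum x).unique ?_
  refine ((hj.hasSum_mul_deriv x).add ((hj.hasSum x).mul_left (α + 1 + j : ℝ))).congr_fun
    fun k => ?_
  rw [kummerCoeff_succ_left]
  ring

lemma kummerWeight_succ (α β k : ℕ) :
    (k + 1 : ℝ) * (k + β + 1) * kummerWeight α β (k + 1) = (k + α + 1) * kummerWeight α β k := by
  have hβ : ((k + β).factorial : ℝ) ≠ 0 := by positivity
  have hk : (k.factorial : ℝ) ≠ 0 := by positivity
  have hβ' : (k + β + 1 : ℝ) ≠ 0 := by positivity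
  rw [kummerWeight, kummerWeight, add_right_comm k 1 α, add_right_comm k 1 β,
    Nat.factorial_succ, Nat.factorial_succ, Nat.factorial_succ k]
  push_cast
  field_simp

lemma kummerCoeff_succ_right (α β j k : ℕ) :
    (k + 1 : ℝ) * (k + β + 1) * kummerCoeff α β j (k + 1)
      = (k + α + 1 + j) * kummerCoeff α β j k := by
  have hasc : (k + α + 1 : ℝ) * (k + 1 + α + 1).ascFactorial j
      = (k + α + 1 + j) * (k + α + 1).ascFactorial j := by
    rw [add_right_comm k 1 α]
    exact_mod_cast Nat.succ_ascFactorial (k + α + 1) j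
  rw [kummerCoeff, kummerCoeff]
  linear_combination ((k + 1 + α + 1).ascFactorial j : ℝ) * kummerWeight_succ α β k
    + kummerWeight α β k * hasc

lemma kummer_equation_kummerFun (h : α ≤ β) (j : ℕ) (x : ℝ) :
    x * deriv (deriv (kummerFun α β j)) x + (β + 1 - x) * deriv (kummerFun α β j) x
      = (α + 1 + j) * kummerFun α β j x := by
  have hj := isEntireSeq_kummerCoeff h j
  have hleft := (hj.derivCoeff.hasSum_mul_deriv x).add
    ((hj.derivCoeff.hasSum x).mul_left (β + 1 : ℝ))
  have hright := (hj.hasSum_mul_deriv x).add ((hj.hasSum x).mul_left (α + 1 + j : ℝ))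
  rw [← hj.deriv_entireSum] at hleft
  have hcoeff := hleft.unique (hright.congr_fun fun k => by
    rw [derivCoeff]
    linear_combination x ^ k * kummerCoeff_succ_right α β j k)
  rw [kummerFun]
  linear_combination hcoeff

lemma analyticAt_kummerFun (h : α ≤ β) (j : ℕ) (x : ℝ) : AnalyticAt ℝ (kummerFun α β j) x :=
  (isEntireSeq_kummerCoeff h j).analyticAt x

end KummerSeries

section Andreief

variable {ι κ R : Type*} [Fintype ι] [DecidableEq ι] [CommRing R]

lemma det_sum_rows (t : ι → Finset κ) (g : ι → κ → ι → R) :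
    (Matrix.of fun i j => ∑ k ∈ t i, g i k j).det
      = ∑ r ∈ Fintype.piFinset t, (Matrix.of fun i j => g i (r i) j).det := by
  have hsum : (Matrix.of fun i j => ∑ k ∈ t i, g i k j) = fun i => ∑ k ∈ t i, g i k := by
    ext i j; simp
  rw [hsum]
  exact Matrix.detRowAlternating.toMultilinearMap.map_sum_finset g t

lemma sum_prod_mul_det_eq_sum_perm (t : Finset κ) (A : ι → κ → R) (B : κ → ι → R)
    (σ : Equiv.Perm ι) :
    ∑ r ∈ Fintype.piFinset fun _ : ι => t,
        (∏ i, A i (r i)) * (Matrix.of fun l j => B (r l) j).det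
      = ∑ r ∈ Fintype.piFinset fun _ : ι => t,
        ((Equiv.Perm.sign σ : ℤ) : R) * (∏ i, A i (r (σ i)))
          * (Matrix.of fun l j => B (r l) j).det := by
  refine Finset.sum_bij' (fun r _ => r ∘ σ.symm) (fun r _ => r ∘ σ)
    (fun r hr => Fintype.mem_piFinset.2 fun i => Fintype.mem_piFinset.1 hr _)
    (fun r hr => Fintype.mem_piFinset.2 fun i => Fintype.mem_piFinset.1 hr _)
    (fun r _ => by ext i; simp) (fun r _ => by ext i; simp) fun r _ => ?_
  have hdet := Matrix.det_permute σ (Matrix.of fun l j => B (r (σ.symm l)) j)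
  have hsub : (Matrix.of fun l j => B (r (σ.symm l)) j).submatrix σ id
      = Matrix.of fun l j => B (r l) j := by
    ext l j; simp
  rw [hsub] at hdet
  simp only [Function.comp_apply, Equiv.symm_apply_apply, hdet]
  ring

lemma factorial_mul_det_sum_mul (t : Finset κ) (A : ι → κ → R) (B : κ → ι → R) :
    ((Fintype.card ι).factorial : R) * (Matrix.of fun i j => ∑ k ∈ t, A i k * B k j).det
      = ∑ r ∈ Fintype.piFinset fun _ : ι => t,
        (Matrix.of fun i l => A i (r l)).det * (Matrix.of fun l j => B (r l) j).det := by
  have hrows : (Matrix.of fun i j => ∑ k ∈ t, A i k * B k j).det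
      = ∑ r ∈ Fintype.piFinset fun _ : ι => t,
        (∏ i, A i (r i)) * (Matrix.of fun l j => B (r l) j).det := by
    rw [det_sum_rows (fun _ => t) fun i k j => A i k * B k j]
    exact Finset.sum_congr rfl fun r _ =>
      Matrix.det_mul_column (fun i => A i (r i)) (Matrix.of fun l j => B (r l) j)
  rw [← Fintype.card_perm, ← nsmul_eq_mul, ← Finset.card_univ, ← Finset.sum_const, hrows,
    Finset.sum_congr rfl fun σ _ => sum_prod_mul_det_eq_sum_perm t A B σ, Finset.sum_comm]
  refine Finset.sum_congr rfl fun r _ => ?_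
  rw [← Finset.sum_mul, ← Matrix.det_transpose (Matrix.of fun i l => A i (r l)),
    Matrix.det_apply' (Matrix.transpose _)]
  rfl

lemma hasSum_of_nonneg_of_tendsto {f : κ → ℝ} {P : ℕ → Finset κ} {V : ℝ} (hf : ∀ k, 0 ≤ f k)
    (hP : Tendsto P atTop atTop) (hV : Tendsto (fun K => ∑ k ∈ P K, f k) atTop (𝓝 V)) :
    HasSum f V := by
  have hsummable : Summable f := summable_of_sum_le hf fun u =>
    ge_of_tendsto hV <| (hP.eventually_ge_atTop u).mono fun K hK =>
      Finset.sum_le_sum_of_subset_of_nonneg hK fun k _ _ => hf k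
  exact tendsto_nhds_unique (hsummable.hasSum.comp hP) hV ▸ hsummable.hasSum

lemma tendsto_piFinset_range_atTop :
    Tendsto (fun K => Fintype.piFinset fun _ : ι => Finset.range K) atTop atTop := by
  refine tendsto_atTop_finset_of_monotone
    (fun K K' hK => Fintype.piFinset_subset _ _ fun _ => Finset.range_mono hK)
    fun r => ⟨Finset.univ.sup r + 1, Fintype.mem_piFinset.2 fun i => ?_⟩
  exact Finset.mem_range.2 (Nat.lt_succ_of_le (Finset.le_sup (f := r) (Finset.mem_univ i)))

lemma hasSum_det_mul_det {A : ι → ℕ → ℝ} {B : ℕ → ι → ℝ} {M : ι → ι → ℝ}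
    (hM : ∀ i j, HasSum (fun k => A i k * B k j) (M i j))
    (hnonneg : ∀ r : ι → ℕ,
      0 ≤ (Matrix.of fun i l => A i (r l)).det * (Matrix.of fun l j => B (r l) j).det) :
    HasSum (fun r : ι → ℕ =>
        (Matrix.of fun i l => A i (r l)).det * (Matrix.of fun l j => B (r l) j).det)
      ((Fintype.card ι).factorial * (Matrix.of M).det) := by
  refine hasSum_of_nonneg_of_tendsto hnonneg tendsto_piFinset_range_atTop ?_
  simp only [← factorial_mul_det_sum_mul]
  refine Tendsto.const_mul _ <|
    ((Continuous.matrix_det continuous_id).tendsto (Matrix.of M)).comp ?_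
  exact tendsto_pi_nhds.2 fun i => tendsto_pi_nhds.2 fun j => (hM i j).tendsto_sum_nat

end Andreief

lemma hasSum_strictMono_of_hasSum {κ : Type*} [LinearOrder κ] {N : ℕ} {f : (Fin N → κ) → ℝ}
    {V : ℝ} (hf : HasSum f (N.factorial * V))
    (hsymm : ∀ (r : Fin N → κ) (σ : Equiv.Perm (Fin N)), f (r ∘ σ) = f r)
    (hzero : ∀ r, ¬ Function.Injective r → f r = 0) :
    HasSum (fun r : {r : Fin N → κ // StrictMono r} => f r) V := by
  let e : {r : Fin N → κ // StrictMono r} × Equiv.Perm (Fin N) → (Fin N → κ) :=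
    fun c => c.1 ∘ c.2
  have hinj : Function.Injective e := by
    rintro ⟨⟨r, hr⟩, σ⟩ ⟨⟨r', hr'⟩, σ'⟩ h
    have hcomp : r ∘ σ = r' ∘ σ' := h
    obtain rfl : r = r' := by
      rw [← hr.range_inj hr', ← σ.surjective.range_comp r, hcomp, σ'.surjective.range_comp]
    obtain rfl : σ = σ' := Equiv.ext fun i => hr.injective (congrFun hcomp i)
    rfl
  have hsorted : ∀ r ∉ Set.range e, f r = 0 := by
    refine fun r hr => hzero r fun hri => hr ⟨(⟨r ∘ Tuple.sort r, ?_⟩, (Tuple.sort r)⁻¹), ?_⟩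
    · exact (Tuple.monotone_sort r).strictMono_of_injective (hri.comp (Tuple.sort r).injective)
    · funext i; simp [e]
  have hfiber (r : {r : Fin N → κ // StrictMono r}) :
      HasSum (fun σ => (f ∘ e) (r, σ)) (N.factorial * f r) := by
    convert hasSum_fintype (fun σ => (f ∘ e) (r, σ)) using 1
    simp [e, hsymm, Fintype.card_perm]
  have hne : (N.factorial : ℝ) ≠ 0 := by positivity
  simpa [inv_mul_cancel_left₀ hne] using
    (((hinj.hasSum_iff hsorted).2 hf).prod_fiberwise hfiber).mul_left (N.factorial : ℝ)⁻¹

section KummerEnsemble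

variable {α β N : ℕ}

lemma det_descFactorial_eq_det_vandermonde (r : Fin N → ℕ) :
    (Matrix.of fun j l : Fin N => ((r l).descFactorial j : ℝ)).det
      = (Matrix.vandermonde fun l => (r l : ℝ)).det := by
  rw [← Matrix.det_transpose, Matrix.det_eval_matrixOfPolynomials_eq_det_vandermonde
    (fun l => (r l : ℝ)) (fun j => descPochhammer ℝ j)
    (fun i => descPochhammer_natDegree ℝ i) (fun i => monic_descPochhammer ℝ i)]
  congr 1
  ext l j
  simp [descPochhammer_eval_eq_descFactorial]

lemma det_ascFactorial_eq_det_vandermonde (a : ℕ) (r : Fin N → ℕ) :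
    (Matrix.of fun l j : Fin N => ((r l + a).ascFactorial j : ℝ)).det
      = (Matrix.vandermonde fun l => (r l : ℝ)).det := by
  rw [← Matrix.det_vandermonde_add _ (a : ℝ),
    Matrix.det_eval_matrixOfPolynomials_eq_det_vandermonde _ (fun j => ascPochhammer ℝ j)
      (fun i => ascPochhammer_natDegree ℝ i) (fun i => monic_ascPochhammer ℝ i)]
  congr 1
  ext l j
  rw [Matrix.of_apply, Matrix.of_apply, ← Nat.cast_add, ← ascPochhammer_eval_cast,
    ascPochhammer_nat_eq_ascFactorial]

lemma det_mul_kummerCoeff (α β : ℕ) (g : ℕ → ℝ) (r : Fin N → ℕ) :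
    (Matrix.of fun l j : Fin N => g (r l) * kummerCoeff α β j (r l)).det
      = (∏ l, g (r l) * kummerWeight α β (r l)) * (Matrix.vandermonde fun l => (r l : ℝ)).det := by
  rw [← det_ascFactorial_eq_det_vandermonde (α + 1), ← Matrix.det_mul_column]
  congr 1
  ext l j
  simp only [Matrix.of_apply, kummerCoeff, add_assoc]
  ring

/-- The unnormalised weight of the configuration `r` of `N` particles in the discrete orthogonal
polynomial ensemble with weight `kummerWeight α β k * x ^ k`. -/
def kummerEnsemble (α β N : ℕ) (x : ℝ) (r : Fin N → ℕ) : ℝ :=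
  (Matrix.vandermonde fun l => (r l : ℝ)).det ^ 2 * ∏ l, x ^ r l * kummerWeight α β (r l)

lemma kummerEnsemble_nonneg {x : ℝ} (hx : 0 ≤ x) (r : Fin N → ℕ) :
    0 ≤ kummerEnsemble α β N x r :=
  mul_nonneg (sq_nonneg _) <| Finset.prod_nonneg fun l _ =>
    mul_nonneg (pow_nonneg hx _) (kummerWeight_pos α β (r l)).le

lemma kummerEnsemble_comp_perm (x : ℝ) (r : Fin N → ℕ) (σ : Equiv.Perm (Fin N)) :
    kummerEnsemble α β N x (r ∘ σ) = kummerEnsemble α β N x r := by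
  have hdet : (Matrix.vandermonde fun l => ((r ∘ σ) l : ℝ)).det
      = Equiv.Perm.sign σ * (Matrix.vandermonde fun l => (r l : ℝ)).det :=
    Matrix.det_permute σ (Matrix.vandermonde fun l => (r l : ℝ))
  have hsign : ((Equiv.Perm.sign σ : ℤ) : ℝ) ^ 2 = 1 := by
    rcases Int.units_eq_one_or (Equiv.Perm.sign σ) with h | h <;> simp [h]
  rw [kummerEnsemble, kummerEnsemble, hdet, mul_pow, hsign, one_mul]
  exact congrArg _ (Equiv.prod_comp σ fun l => x ^ r l * kummerWeight α β (r l))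

lemma kummerEnsemble_of_not_injective (x : ℝ) {r : Fin N → ℕ} (h : ¬ Function.Injective r) :
    kummerEnsemble α β N x r = 0 := by
  have hdet : (Matrix.vandermonde fun l => (r l : ℝ)).det = 0 := by
    by_contra hne
    exact h (.of_comp (f := ((↑) : ℕ → ℝ)) (Matrix.det_vandermonde_ne_zero_iff.1 hne))
  rw [kummerEnsemble, hdet, zero_pow two_ne_zero, zero_mul]

lemma hasSum_kummerEnsemble (h : α ≤ β) {x : ℝ} (hx : 0 ≤ x) :
    HasSum (kummerEnsemble α β N x)
      (N.factorial * ((∏ i : Fin N, x ^ (i : ℕ)) * wronskian (kummerFun α β) N x)) := by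
  have hterm (r : Fin N → ℕ) : (Matrix.of fun i l : Fin N => ((r l).descFactorial i : ℝ)).det
        * (Matrix.of fun l j : Fin N => x ^ r l * kummerCoeff α β j (r l)).det
      = kummerEnsemble α β N x r := by
    rw [det_descFactorial_eq_det_vandermonde, det_mul_kummerCoeff α β (x ^ ·), kummerEnsemble]
    ring
  have hentry (i j : Fin N) :
      HasSum (fun k => (k.descFactorial i : ℝ) * (x ^ k * kummerCoeff α β j k))
        (x ^ (i : ℕ) * iteratedDeriv i (kummerFun α β j) x) :=
    ((isEntireSeq_kummerCoeff h j).hasSum_iteratedDeriv i x).congr_fun fun k => by ring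
  have hsum := hasSum_det_mul_det hentry fun r => by
    rw [hterm r]; exact kummerEnsemble_nonneg hx r
  rw [Fintype.card_fin] at hsum
  convert hsum.congr_fun fun r => (hterm r).symm using 2
  exact (Matrix.det_mul_column (fun i : Fin N => x ^ (i : ℕ))
    (Matrix.of fun i j : Fin N => iteratedDeriv i (kummerFun α β j) x)).symm

lemma hasSum_kummerEnsemble_strictMono (h : α ≤ β) {x : ℝ} (hx : 0 ≤ x) :
    HasSum (fun r : {r : Fin N → ℕ // StrictMono r} => kummerEnsemble α β N x r)
      ((∏ i : Fin N, x ^ (i : ℕ)) * wronskian (kummerFun α β) N x) :=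
  hasSum_strictMono_of_hasSum (hasSum_kummerEnsemble h hx) (kummerEnsemble_comp_perm x)
    fun _ => kummerEnsemble_of_not_injective x

lemma wronskian_kummerFun_zero_ne_zero (h : α ≤ β) (N : ℕ) :
    wronskian (kummerFun α β) N 0 ≠ 0 := by
  have hentry (i j : Fin N) : iteratedDeriv i (kummerFun α β j) 0
      = ((i : ℕ).factorial : ℝ) * kummerCoeff α β j i :=
    (isEntireSeq_kummerCoeff h j).iteratedDeriv_entireSum_zero i
  simp only [wronskian, hentry]
  rw [det_mul_kummerCoeff α β (fun k => (k.factorial : ℝ)) fun l : Fin N => (l : ℕ)]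
  refine mul_ne_zero (Finset.prod_ne_zero_iff.2 fun i _ =>
    mul_ne_zero (by positivity) (kummerWeight_pos α β i).ne') ?_
  exact Matrix.det_vandermonde_ne_zero_iff.2 (Nat.cast_injective.comp Fin.val_injective)

end KummerEnsemble

section ShiftedRows

variable {p : ℕ} {μ ν : YoungDiagram}

lemma eq_of_rowLen_eq (h : ∀ i, μ.rowLen i = ν.rowLen i) : μ = ν := by
  ext ⟨i, j⟩
  rw [YoungDiagram.mem_cells, YoungDiagram.mem_cells, YoungDiagram.mem_iff_lt_rowLen,
    YoungDiagram.mem_iff_lt_rowLen, h]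

lemma rowLen_le_rowLen_iff {i i' : ℕ} :
    μ.rowLen i ≤ ν.rowLen i' ↔ ∀ j, (i, j) ∈ μ → (i', j) ∈ ν := by
  simp only [YoungDiagram.mem_iff_lt_rowLen]
  exact ⟨fun h j hj => hj.trans_le h, fun h => not_lt.1 fun hlt => (h _ hlt).false⟩

lemma rowLen_eq_zero_of_le (h : μ.rowLen p = 0) {i : ℕ} (hi : p ≤ i) : μ.rowLen i = 0 :=
  Nat.eq_zero_of_le_zero (h ▸ μ.rowLen_anti p i hi)

lemma exists_rowLen_eq {f : ℕ → ℕ} (hf : Antitone f) (hp : f p = 0) :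
    ∃ μ : YoungDiagram, ∀ i, μ.rowLen i = f i := by
  let μ : YoungDiagram :=
    { cells := (Finset.range p ×ˢ Finset.range (f 0)).filter fun c => c.2 < f c.1
      isLowerSet := by
        rintro ⟨i, j⟩ ⟨i', j'⟩ ⟨hi : i' ≤ i, hj : j' ≤ j⟩ h
        have := hf hi
        simp only [Finset.coe_filter, Finset.mem_product, Finset.mem_range,
          Set.mem_ofPred_eq] at h ⊢
        omega }
  have hmem (i j : ℕ) : (i, j) ∈ μ ↔ j < f i := by
    have := hf (Nat.zero_le i)
    rw [← YoungDiagram.mem_cells]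
    simp only [μ, Finset.mem_filter, Finset.mem_product, Finset.mem_range]
    refine ⟨And.right, fun hj => ⟨⟨not_le.1 fun hi => ?_, by omega⟩, hj⟩⟩
    have := hf hi
    omega
  refine ⟨μ, fun i => le_antisymm (not_lt.1 fun h => ?_) (not_lt.1 fun h => ?_)⟩
  · exact lt_irrefl _ ((hmem i _).1 (YoungDiagram.mem_iff_lt_rowLen.2 h))
  · exact lt_irrefl _ (YoungDiagram.mem_iff_lt_rowLen.1 ((hmem i _).2 h))

/-- The first `p` row lengths of `μ`, listed from the bottom up and shifted by `0, 1, …, p - 1` so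
that they become strictly increasing. -/
def shiftedRows (p : ℕ) (μ : YoungDiagram) (a : Fin p) : ℕ := μ.rowLen a.rev + a

lemma shiftedRows_rev (μ : YoungDiagram) (a : Fin p) :
    shiftedRows p μ a.rev = μ.rowLen a + a.rev := by
  rw [shiftedRows, Fin.rev_rev]

lemma strictMono_shiftedRows (p : ℕ) (μ : YoungDiagram) : StrictMono (shiftedRows p μ) :=
  fun _ _ hab => add_lt_add_of_le_of_lt
    (μ.rowLen_anti _ _ (Fin.rev_le_rev.2 hab.le)) hab

lemma injOn_shiftedRows (p : ℕ) : Set.InjOn (shiftedRows p) {μ | μ.rowLen p = 0} := by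
  refine fun μ hμ ν hν h => eq_of_rowLen_eq fun i => ?_
  obtain hi | hi := lt_or_ge i p
  · have := congrFun h (Fin.rev ⟨i, hi⟩)
    rw [shiftedRows_rev, shiftedRows_rev] at this
    exact Nat.add_right_cancel this
  · rw [rowLen_eq_zero_of_le hμ hi, rowLen_eq_zero_of_le hν hi]

lemma monotone_sub_of_strictMono {L : Fin p → ℕ} (hL : StrictMono L) :
    Monotone fun a => L a - a := by
  cases p with
  | zero => exact fun a => a.elim0
  | succ p =>
    refine Fin.monotone_iff_le_succ.2 fun a => ?_
    have := hL a.castSucc_lt_succ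
    simp only [Fin.val_castSucc, Fin.val_succ]
    omega

lemma val_le_of_strictMono {L : Fin p → ℕ} (hL : StrictMono L) (a : Fin p) : (a : ℕ) ≤ L a := by
  simpa using Finset.card_le_card_of_injOn (s := Finset.Iio a) (t := Finset.Iio (L a)) L
    (fun b hb => by simpa using hL (by simpa using hb)) hL.injective.injOn

lemma exists_shiftedRows_eq {L : Fin p → ℕ} (hL : StrictMono L) :
    ∃ μ : YoungDiagram, μ.rowLen p = 0 ∧ shiftedRows p μ = L := by
  let f (i : ℕ) : ℕ := if h : i < p then L (Fin.rev ⟨i, h⟩) - Fin.rev ⟨i, h⟩ else 0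
  have hf : Antitone f := fun i i' hi => by
    by_cases hi' : i' < p
    · simp only [f, hi', hi.trans_lt hi', dif_pos]
      exact monotone_sub_of_strictMono hL (Fin.rev_le_rev.2 hi)
    · simp [f, hi']
  obtain ⟨μ, hμ⟩ := exists_rowLen_eq hf (show f p = 0 by simp [f])
  refine ⟨μ, by simp [hμ, f], funext fun a => ?_⟩
  rw [shiftedRows, hμ]
  simp only [f, a.rev.2, dif_pos, Fin.eta, Fin.rev_rev]
  exact Nat.sub_add_cancel (val_le_of_strictMono hL a)

end ShiftedRows

section Tableaux

variable {p : ℕ} {μ lam : YoungDiagram}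

/-- The semistandard tableaux counted by `numSSYT μ p`. -/
def boundedTableaux (μ : YoungDiagram) (p : ℕ) : Set (SemistandardYoungTableau μ) :=
  {T | ∀ c ∈ μ.cells, T c.1 c.2 < p}

lemma finite_boundedTableaux (μ : YoungDiagram) (p : ℕ) : (boundedTableaux μ p).Finite := by
  refine Set.Finite.of_injOn (f := fun T c => Fin.ofNat (p + 1) (T c.1.1 c.1.2))
    (fun _ _ => Set.mem_univ _) (fun T hT T' hT' h => ?_)
    (Set.finite_univ (α := μ.cells → Fin (p + 1)))
  refine SemistandardYoungTableau.ext fun i j => ?_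
  by_cases hc : (i, j) ∈ μ
  · have hmod := congrArg Fin.val (congrFun h ⟨(i, j), hc⟩)
    rwa [Fin.val_ofNat, Fin.val_ofNat, Nat.mod_eq_of_lt ((hT (i, j) hc).trans p.lt_succ_self),
      Nat.mod_eq_of_lt ((hT' (i, j) hc).trans p.lt_succ_self)] at hmod
  · rw [T.zeros hc, T'.zeros hc]

lemma le_entry_zero (T : SemistandardYoungTableau μ) {i : ℕ} (h : (i, 0) ∈ μ) : i ≤ T i 0 := by
  induction i with
  | zero => exact Nat.zero_le _
  | succ i ih =>
    exact (ih (μ.up_left_mem i.le_succ le_rfl h)).trans_lt (T.col_strict i.lt_succ_self h)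

lemma numSSYT_eq_zero_of_rowLen_ne_zero (h : μ.rowLen p ≠ 0) : numSSYT μ p = 0 := by
  refine (Set.ncard_eq_zero (finite_boundedTableaux μ p)).2
    (Set.eq_empty_iff_forall_notMem.2 fun T hT => ?_)
  have hmem : (p, 0) ∈ μ := YoungDiagram.mem_iff_lt_rowLen.2 (Nat.pos_of_ne_zero h)
  exact (le_entry_zero T hmem).not_gt (hT _ hmem)

/-- `lam / μ` is a horizontal strip: it has at most one cell in each column. -/
def IsHorizontalStrip (μ lam : YoungDiagram) : Prop :=
  μ ≤ lam ∧ ∀ i j, (i + 1, j) ∈ lam → (i, j) ∈ μ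

lemma isHorizontalStrip_iff_rowLen : IsHorizontalStrip μ lam ↔
    ∀ i, lam.rowLen (i + 1) ≤ μ.rowLen i ∧ μ.rowLen i ≤ lam.rowLen i := by
  simp only [rowLen_le_rowLen_iff, forall_and]
  exact ⟨fun h => ⟨h.2, fun _ _ hij => h.1 hij⟩, fun h => ⟨fun c hc => h.2 c.1 c.2 hc, h.1⟩⟩

lemma isHorizontalStrip_iff_shiftedRows (hμ : μ.rowLen p = 0) (hlam : lam.rowLen (p + 1) = 0) :
    IsHorizontalStrip μ lam ↔ shiftedRows p μ ∈ Fintype.piFinset fun a : Fin p =>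
      Finset.Ico (shiftedRows (p + 1) lam a.castSucc) (shiftedRows (p + 1) lam a.succ) := by
  simp only [isHorizontalStrip_iff_rowLen, Fintype.mem_piFinset, Finset.mem_Ico, shiftedRows,
    Fin.rev_castSucc, Fin.rev_succ, Fin.val_succ, Fin.val_castSucc]
  refine ⟨fun h a => ?_, fun h i => ?_⟩
  · have := h a.rev
    omega
  · obtain hi | hi := lt_or_ge i p
    · have := h (Fin.rev ⟨i, hi⟩)
      simp only [Fin.rev_rev] at this
      omega
    · rw [rowLen_eq_zero_of_le hμ hi, rowLen_eq_zero_of_le hlam (Nat.succ_le_succ hi)]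
      omega

/-- The cells of `T` with entry below `p`. -/
def entriesBelow (T : SemistandardYoungTableau lam) (p : ℕ) : YoungDiagram where
  cells := lam.cells.filter fun c => T c.1 c.2 < p
  isLowerSet := by
    rintro ⟨i, j⟩ ⟨i', j'⟩ ⟨hi : i' ≤ i, hj : j' ≤ j⟩ h
    simp only [Finset.coe_filter, Set.mem_ofPred_eq, YoungDiagram.mem_cells] at h ⊢
    have hij' := lam.up_left_mem le_rfl hj h.1
    exact ⟨lam.up_left_mem hi le_rfl hij',
      ((T.col_weak hi hij').trans (T.row_weak_of_le hj h.1)).trans_lt h.2⟩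

lemma mem_entriesBelow {T : SemistandardYoungTableau lam} {i j : ℕ} :
    (i, j) ∈ entriesBelow T p ↔ (i, j) ∈ lam ∧ T i j < p := by
  rw [← YoungDiagram.mem_cells]
  simp [entriesBelow]

lemma rowLen_entriesBelow (T : SemistandardYoungTableau lam) (p : ℕ) :
    (entriesBelow T p).rowLen p = 0 := by
  by_contra hne
  have hmem := mem_entriesBelow.1 (YoungDiagram.mem_iff_lt_rowLen.2 (Nat.pos_of_ne_zero hne))
  exact (le_entry_zero T hmem.1).not_gt hmem.2

lemma isHorizontalStrip_entriesBelow {T : SemistandardYoungTableau lam}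
    (hT : T ∈ boundedTableaux lam (p + 1)) : IsHorizontalStrip (entriesBelow T p) lam :=
  ⟨fun _ hc => (mem_entriesBelow.1 hc).1, fun i _ hij =>
    mem_entriesBelow.2 ⟨lam.up_left_mem i.le_succ le_rfl hij,
      (T.col_strict i.lt_succ_self hij).trans_le (Nat.le_of_lt_succ (hT _ hij))⟩⟩

/-- The tableau of shape `lam` obtained from `T` by filling the horizontal strip `lam / μ` with the
entry `p`. -/
def extendTableau (h : IsHorizontalStrip μ lam) (T : boundedTableaux μ p) :
    SemistandardYoungTableau lam where
  entry i j := if (i, j) ∈ μ then T.1 i j else if (i, j) ∈ lam then p else 0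
  row_weak' := by
    intro i j₁ j₂ hj hmem
    have hmem₁ : (i, j₁) ∈ lam := lam.up_left_mem le_rfl hj.le hmem
    by_cases hμ : (i, j₂) ∈ μ
    · simp only [hμ, μ.up_left_mem le_rfl hj.le hμ, if_true]
      exact T.1.row_weak hj hμ
    · simp only [hμ, hmem, hmem₁, if_true, if_false]
      split_ifs with hμ₁
      exacts [(T.2 _ hμ₁).le, le_rfl]
  col_strict' := by
    intro i₁ i₂ j hi hmem
    have hμ₁ : (i₁, j) ∈ μ := h.2 i₁ j (lam.up_left_mem hi le_rfl hmem)
    by_cases hμ : (i₂, j) ∈ μ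
    · simp only [hμ, hμ₁, if_true]
      exact T.1.col_strict hi hμ
    · simp only [hμ, hmem, hμ₁, if_true, if_false]
      exact T.2 _ hμ₁
  zeros' := by
    intro i j hmem
    have hμ : (i, j) ∉ μ := fun hμ => hmem (h.1 hμ)
    simp [hmem, hμ]

lemma extendTableau_apply (h : IsHorizontalStrip μ lam) (T : boundedTableaux μ p) (i j : ℕ) :
    extendTableau h T i j = if (i, j) ∈ μ then T.1 i j else if (i, j) ∈ lam then p else 0 := rfl

/-- The restriction of the tableau `T` to a smaller diagram. -/
def restrictTableau (h : μ ≤ lam) (T : SemistandardYoungTableau lam) :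
    SemistandardYoungTableau μ where
  entry i j := if (i, j) ∈ μ then T i j else 0
  row_weak' := by
    intro i j₁ j₂ hj hmem
    simp only [hmem, μ.up_left_mem le_rfl hj.le hmem, if_true]
    exact T.row_weak hj (h hmem)
  col_strict' := by
    intro i₁ i₂ j hi hmem
    simp only [hmem, μ.up_left_mem hi.le le_rfl hmem, if_true]
    exact T.col_strict hi (h hmem)
  zeros' := fun hmem => if_neg hmem

lemma restrictTableau_apply (h : μ ≤ lam) (T : SemistandardYoungTableau lam) (i j : ℕ) :
    restrictTableau h T i j = if (i, j) ∈ μ then T i j else 0 := rfl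

lemma extendTableau_mem (h : IsHorizontalStrip μ lam) (T : boundedTableaux μ p) :
    extendTableau h T ∈ boundedTableaux lam (p + 1) := by
  rintro ⟨i, j⟩ _
  rw [extendTableau_apply]
  split_ifs with hμ
  exacts [(T.2 _ hμ).trans p.lt_succ_self, p.lt_succ_self, p.succ_pos]

lemma entriesBelow_extendTableau (h : IsHorizontalStrip μ lam) (T : boundedTableaux μ p) :
    entriesBelow (extendTableau h T) p = μ := by
  ext ⟨i, j⟩
  rw [YoungDiagram.mem_cells, YoungDiagram.mem_cells, mem_entriesBelow, extendTableau_apply]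
  refine ⟨fun hmem => by_contra fun hμ => ?_, fun hμ => ⟨h.1 hμ, ?_⟩⟩
  · simp [hμ, hmem.1] at hmem
  · rw [if_pos hμ]
    exact T.2 _ hμ

lemma injective_extendTableau (h : IsHorizontalStrip μ lam) :
    Function.Injective (extendTableau h (p := p)) := by
  refine fun T T' hTT' => Subtype.ext (SemistandardYoungTableau.ext fun i j => ?_)
  by_cases hμ : (i, j) ∈ μ
  · simpa [extendTableau_apply, hμ] using
      congrArg (fun T : SemistandardYoungTableau lam => T i j) hTT'
  · rw [T.1.zeros hμ, T'.1.zeros hμ]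

lemma exists_extendTableau_eq (h : IsHorizontalStrip μ lam) {T : SemistandardYoungTableau lam}
    (hT : T ∈ boundedTableaux lam (p + 1)) (hμ : entriesBelow T p = μ) :
    ∃ S : boundedTableaux μ p, extendTableau h S = T := by
  refine ⟨⟨restrictTableau h.1 T, ?_⟩, SemistandardYoungTableau.ext fun i j => ?_⟩
  · rintro ⟨i, j⟩ (hmem : (i, j) ∈ μ)
    rw [restrictTableau_apply, if_pos hmem]
    exact (mem_entriesBelow.1 (hμ ▸ hmem)).2
  · rw [extendTableau_apply, restrictTableau_apply]
    split_ifs with hmem hlam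
    · rfl
    · refine le_antisymm (not_lt.1 fun hlt => hmem ?_) (Nat.le_of_lt_succ (hT _ hlam))
      exact hμ ▸ mem_entriesBelow.2 ⟨hlam, hlt⟩
    · exact (T.zeros hlam).symm

lemma ncard_entriesBelow_eq (h : IsHorizontalStrip μ lam) :
    {T ∈ boundedTableaux lam (p + 1) | entriesBelow T p = μ}.ncard = numSSYT μ p := by
  have hrange : {T ∈ boundedTableaux lam (p + 1) | entriesBelow T p = μ}
      = Set.range (extendTableau h (p := p)) := by
    ext T
    refine ⟨fun hT => exists_extendTableau_eq h hT.1 hT.2, ?_⟩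
    rintro ⟨S, rfl⟩
    exact ⟨extendTableau_mem h S, entriesBelow_extendTableau h S⟩
  rw [hrange, ← Set.image_univ, Set.ncard_image_of_injective _ (injective_extendTableau h),
    Set.ncard_univ]
  rfl

end Tableaux

section WeylDimension

variable {p : ℕ}

lemma sum_Ico_choose {a b : ℕ} (hab : a ≤ b) (j : ℕ) :
    ∑ k ∈ Finset.Ico a b, (k.choose j : ℝ) = b.choose (j + 1) - a.choose (j + 1) := by
  rw [← Finset.sum_Ico_sub (fun k => (k.choose (j + 1) : ℝ)) hab]
  refine Finset.sum_congr rfl fun k _ => ?_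
  rw [Nat.choose_succ_succ' k j]
  push_cast
  ring

lemma sum_det_choose_interlacing {L : Fin (p + 1) → ℕ} (hL : Monotone L) :
    ∑ M ∈ Fintype.piFinset fun a : Fin p => Finset.Ico (L a.castSucc) (L a.succ),
        (Matrix.of fun a j : Fin p => ((M a).choose j : ℝ)).det
      = (Matrix.of fun a j : Fin (p + 1) => ((L a).choose j : ℝ)).det := by
  have hrow (a : Fin p) (j : ℕ) := sum_Ico_choose (hL (Fin.castSucc_lt_succ (i := a)).le) j
  rw [← det_sum_rows (fun a : Fin p => Finset.Ico (L a.castSucc) (L a.succ))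
    fun _ k j => (k.choose j : ℝ)]
  simp only [hrow]
  let B : Matrix (Fin (p + 1)) (Fin (p + 1)) ℝ := Matrix.of fun a j =>
    Fin.cases ((L 0).choose j : ℝ)
      (fun a => ((L a.succ).choose j : ℝ) - (L a.castSucc).choose j) a
  rw [Matrix.det_eq_of_forall_row_eq_smul_add_pred (B := B) (fun _ => 1) (fun j => by simp [B])
    (fun a j => by simp [B]), Matrix.det_succ_column_zero, Finset.sum_eq_single 0]
  · simp [B, Matrix.submatrix]
  · intro a _ ha
    obtain ⟨b, rfl⟩ := Fin.exists_succ_eq.2 ha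
    simp [B]
  · simp

lemma numSSYT_succ {lam : YoungDiagram} (h : lam.rowLen (p + 1) = 0) :
    numSSYT lam (p + 1) = ∑ M ∈ Fintype.piFinset fun a : Fin p =>
        Finset.Ico (shiftedRows (p + 1) lam a.castSucc) (shiftedRows (p + 1) lam a.succ),
      {T ∈ boundedTableaux lam (p + 1) | shiftedRows p (entriesBelow T p) = M}.ncard := by
  classical
  have hfin := finite_boundedTableaux lam (p + 1)
  change (boundedTableaux lam (p + 1)).ncard = _
  rw [Set.ncard_eq_toFinset_card _ hfin, Finset.card_eq_sum_card_fiberwise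
    (f := fun T => shiftedRows p (entriesBelow T p)) fun T hT => ?_]
  · refine Finset.sum_congr rfl fun M _ => ?_
    rw [← Set.ncard_coe_finset]
    congr 1
    ext T
    simp
  · exact (isHorizontalStrip_iff_shiftedRows (rowLen_entriesBelow T p) h).1
      (isHorizontalStrip_entriesBelow (hfin.mem_toFinset.1 hT))

lemma strictMono_of_mem_interlacing {L : Fin (p + 1) → ℕ} (hL : Monotone L) {M : Fin p → ℕ}
    (hM : M ∈ Fintype.piFinset fun a : Fin p => Finset.Ico (L a.castSucc) (L a.succ)) :
    StrictMono M := by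
  intro a b hab
  have hM' (a : Fin p) := Finset.mem_Ico.1 (Fintype.mem_piFinset.1 hM a)
  exact (hM' a).2.trans_le ((hL (Fin.succ_le_castSucc_iff.2 hab)).trans (hM' b).1)

lemma numSSYT_zero {lam : YoungDiagram} (h : lam.rowLen 0 = 0) : numSSYT lam 0 = 1 := by
  have hempty (i j : ℕ) : (i, j) ∉ lam := fun hmem => by
    rw [YoungDiagram.mem_iff_lt_rowLen, rowLen_eq_zero_of_le h i.zero_le] at hmem
    exact Nat.not_lt_zero j hmem
  refine Set.ncard_eq_one.2 ⟨SemistandardYoungTableau.highestWeight lam,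
    Set.eq_singleton_iff_unique_mem.2 ⟨fun c hc => absurd hc (hempty c.1 c.2), fun T _ => ?_⟩⟩
  refine SemistandardYoungTableau.ext fun i j => ?_
  rw [T.zeros (hempty i j), (SemistandardYoungTableau.highestWeight lam).zeros (hempty i j)]

theorem numSSYT_eq_det_choose {lam : YoungDiagram} (h : lam.rowLen p = 0) :
    (numSSYT lam p : ℝ)
      = (Matrix.of fun a j : Fin p => ((shiftedRows p lam a).choose j : ℝ)).det := by
  induction p generalizing lam with
  | zero => simp [numSSYT_zero h]
  | succ p ih =>
    have hmono := (strictMono_shiftedRows (p + 1) lam).monotone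
    rw [← sum_det_choose_interlacing hmono, numSSYT_succ h, Nat.cast_sum]
    refine Finset.sum_congr rfl fun M hM => ?_
    obtain ⟨μ, hμ, rfl⟩ := exists_shiftedRows_eq (strictMono_of_mem_interlacing hmono hM)
    have hstrip := (isHorizontalStrip_iff_shiftedRows hμ h).2 hM
    have hiff (T : SemistandardYoungTableau lam) :
        shiftedRows p (entriesBelow T p) = shiftedRows p μ ↔ entriesBelow T p = μ :=
      (injOn_shiftedRows p).eq_iff (rowLen_entriesBelow T p) hμ
    simp only [hiff, ncard_entriesBelow_eq hstrip, ih hμ]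

lemma prod_factorial_mul_det_choose (L : Fin p → ℕ) :
    (∏ j : Fin p, ((j : ℕ).factorial : ℝ))
        * (Matrix.of fun a j : Fin p => ((L a).choose j : ℝ)).det
      = (Matrix.vandermonde fun a => (L a : ℝ)).det := by
  rw [← det_descFactorial_eq_det_vandermonde, ← Matrix.det_mul_row, ← Matrix.det_transpose]
  congr 1
  ext a j
  simp [Nat.descFactorial_eq_factorial_mul_choose]

end WeylDimension

section Hooks

variable {p : ℕ} {lam : YoungDiagram}

lemma lt_colLen_iff_lt_rowLen {i j : ℕ} : i < lam.colLen j ↔ j < lam.rowLen i := by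
  rw [← YoungDiagram.mem_iff_lt_colLen, YoungDiagram.mem_iff_lt_rowLen]

lemma colLen_le (h : lam.rowLen p = 0) (j : ℕ) : lam.colLen j ≤ p :=
  not_lt.1 fun hj => by simp [lt_colLen_iff_lt_rowLen, h] at hj

lemma injOn_hookLen_row (lam : YoungDiagram) (i : ℕ) :
    Set.InjOn (fun j => hookLen lam (i, j)) (Finset.range (lam.rowLen i)) := by
  refine StrictAntiOn.injOn fun j _ j' hj' hlt => ?_
  have := lam.colLen_anti j j' hlt.le
  have := lt_colLen_iff_lt_rowLen.2 (Finset.mem_range.1 hj')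
  have := Finset.mem_range.1 hj'
  simp only [hookLen]
  omega

lemma injOn_sub_of_strictMono {L : Fin p → ℕ} (hL : StrictMono L) (a : Fin p) :
    Set.InjOn (fun b => L a - L b) (Finset.Iio a) := by
  refine StrictAntiOn.injOn fun b _ b' hb' hlt => ?_
  have := hL hlt
  have := hL (Finset.mem_Iio.1 hb')
  omega

lemma hookLen_mem_Ico (h : lam.rowLen p = 0) (a : Fin p) {j : ℕ} (hj : j < lam.rowLen a.rev) :
    hookLen lam (a.rev, j) ∈ Finset.Ico 1 (shiftedRows p lam a + 1) := by
  have := lt_colLen_iff_lt_rowLen.2 hj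
  have := colLen_le h j
  simp only [hookLen, shiftedRows, Finset.mem_Ico, Fin.val_rev] at *
  omega

lemma hookLen_ne_shiftedRows_sub (h : lam.rowLen p = 0) {a b : Fin p} (hb : b < a) {j : ℕ}
    (hj : j < lam.rowLen a.rev) :
    hookLen lam (a.rev, j) ≠ shiftedRows p lam a - shiftedRows p lam b := by
  have := lt_colLen_iff_lt_rowLen.2 hj
  have := colLen_le h j
  have := strictMono_shiftedRows p lam hb
  have := lt_colLen_iff_lt_rowLen (lam := lam) (i := b.rev) (j := j)
  have := lam.rowLen_anti a.rev b.rev (Fin.rev_le_rev.2 hb.le)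
  have : (b : ℕ) < a := hb
  simp only [hookLen, shiftedRows, Fin.val_rev] at *
  omega

lemma disjoint_image_hookLen_image_sub (h : lam.rowLen p = 0) (a : Fin p) :
    Disjoint ((Finset.range (lam.rowLen a.rev)).image fun j => hookLen lam (a.rev, j))
      ((Finset.Iio a).image fun b => shiftedRows p lam a - shiftedRows p lam b) := by
  simp only [Finset.disjoint_left, Finset.mem_image, Finset.mem_range, Finset.mem_Iio]
  rintro _ ⟨j, hj, rfl⟩ ⟨b, hb, heq⟩
  exact hookLen_ne_shiftedRows_sub h hb hj heq.symm

lemma image_hookLen_union_image_sub (h : lam.rowLen p = 0) (a : Fin p) :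
    ((Finset.range (lam.rowLen a.rev)).image fun j => hookLen lam (a.rev, j)) ∪
      ((Finset.Iio a).image fun b => shiftedRows p lam a - shiftedRows p lam b) =
      Finset.Ico 1 (shiftedRows p lam a + 1) := by
  refine Finset.eq_of_subset_of_card_le (Finset.union_subset ?_ ?_) ?_
  · exact Finset.image_subset_iff.2 fun j hj => hookLen_mem_Ico h a (Finset.mem_range.1 hj)
  · refine Finset.image_subset_iff.2 fun b hb => Finset.mem_Ico.2 ?_
    have := strictMono_shiftedRows p lam (Finset.mem_Iio.1 hb)
    omega
  · rw [Finset.card_union_of_disjoint (disjoint_image_hookLen_image_sub h a),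
      Finset.card_image_of_injOn (injOn_hookLen_row lam _),
      Finset.card_image_of_injOn (injOn_sub_of_strictMono (strictMono_shiftedRows p lam) a)]
    simp [shiftedRows]

lemma prod_hookLen_row_mul_prod_sub (h : lam.rowLen p = 0) (a : Fin p) :
    (∏ j ∈ Finset.range (lam.rowLen a.rev), hookLen lam (a.rev, j)) *
      ∏ b ∈ Finset.Iio a, (shiftedRows p lam a - shiftedRows p lam b) =
      (shiftedRows p lam a).factorial := by
  rw [← Finset.prod_Ico_id_eq_factorial, ← image_hookLen_union_image_sub h a,
    Finset.prod_union (disjoint_image_hookLen_image_sub h a),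
    Finset.prod_image (injOn_hookLen_row lam _),
    Finset.prod_image (injOn_sub_of_strictMono (strictMono_shiftedRows p lam) a)]

@[to_additive]
lemma prod_cells_eq_prod_rows {M : Type*} [CommMonoid M] (h : lam.rowLen p = 0) (f : ℕ × ℕ → M) :
    ∏ c ∈ lam.cells, f c = ∏ a : Fin p, ∏ j ∈ Finset.range (lam.rowLen a.rev), f (a.rev, j) := by
  have hrow : ∀ c ∈ lam.cells, c.1 ∈ Finset.range p := fun c hc =>
    Finset.mem_range.2 ((YoungDiagram.mem_iff_lt_colLen.1 hc).trans_le (colLen_le h _))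
  calc ∏ c ∈ lam.cells, f c
    _ = ∏ i ∈ Finset.range p, ∏ j ∈ Finset.range (lam.rowLen i), f (i, j) := by
        rw [← Finset.prod_fiberwise_of_maps_to hrow]
        refine Finset.prod_congr rfl fun i _ => ?_
        rw [show lam.cells.filter (fun c => c.1 = i) = {i} ×ˢ Finset.range (lam.rowLen i) from
          YoungDiagram.row_eq_prod, Finset.prod_product, Finset.prod_singleton]
    _ = ∏ a : Fin p, ∏ j ∈ Finset.range (lam.rowLen a), f (a, j) :=
        Finset.prod_range fun i => ∏ j ∈ Finset.range (lam.rowLen i), f (i, j)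
    _ = _ := (Equiv.prod_comp Fin.revPerm fun a : Fin p =>
        ∏ j ∈ Finset.range (lam.rowLen a), f (a, j)).symm

lemma card_add_sum_val (h : lam.rowLen p = 0) :
    lam.card + ∑ a : Fin p, (a : ℕ) = ∑ a : Fin p, shiftedRows p lam a := by
  rw [YoungDiagram.card, Finset.card_eq_sum_ones, sum_cells_eq_sum_rows h]
  simp [shiftedRows, Finset.sum_add_distrib]

lemma det_vandermonde_natCast {L : Fin p → ℕ} (hL : StrictMono L) :
    (Matrix.vandermonde fun a => (L a : ℝ)).det =
      ((∏ a : Fin p, ∏ b ∈ Finset.Iio a, (L a - L b) : ℕ) : ℝ) := by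
  rw [Matrix.det_vandermonde, Finset.prod_comm' (t' := Finset.univ) (s' := fun a => Finset.Iio a)
    (by simp)]
  push_cast
  refine Finset.prod_congr rfl fun a _ => Finset.prod_congr rfl fun b hb => ?_
  rw [Nat.cast_sub (hL (Finset.mem_Iio.1 hb)).le]

lemma hookProd_mul_det_vandermonde (h : lam.rowLen p = 0) :
    (hookProd lam : ℝ) * (Matrix.vandermonde fun a => (shiftedRows p lam a : ℝ)).det =
      ∏ a, ((shiftedRows p lam a).factorial : ℝ) := by
  rw [det_vandermonde_natCast (strictMono_shiftedRows p lam), hookProd, prod_cells_eq_prod_rows h,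
    ← Nat.cast_mul, ← Finset.prod_mul_distrib]
  simp only [prod_hookLen_row_mul_prod_sub h, Nat.cast_prod]

lemma prod_Ico_sub_mul_factorial {r s L : ℕ} (hrs : r ≤ s) (hs : s ≤ L) :
    (∏ j ∈ Finset.Ico r s, (L - j)) * (L - s).factorial = (L - r).factorial := by
  induction s, hrs using Nat.le_induction with
  | base => simp
  | succ s hrs ih =>
    rw [Finset.prod_Ico_succ_top hrs, mul_assoc, ← ih (by omega),
      show L - s = L - (s + 1) + 1 by omega, Nat.factorial_succ]

lemma hookLen_eq_shiftedRows_sub {m : ℕ} (h : lam.rowLen p = 0) (hm : ∀ i < p, m ≤ lam.rowLen i)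
    (a : Fin p) {j : ℕ} (hj : j < m) : hookLen lam (a.rev, j) = shiftedRows p lam a - j := by
  have hcol : lam.colLen j = p := by
    refine (colLen_le h j).antisymm (not_lt.1 fun hlt => ?_)
    exact lt_irrefl _ (lt_colLen_iff_lt_rowLen.2 (hj.trans_le (hm _ hlt)))
  simp only [hookLen, shiftedRows, hcol, Fin.val_rev]
  omega

lemma le_shiftedRows {m : ℕ} (hm : ∀ i < p, m ≤ lam.rowLen i) (a : Fin p) :
    m ≤ shiftedRows p lam a :=
  (hm _ a.rev.2).trans (Nat.le_add_right _ _)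

lemma Hstrip_eq_prod_sub {q n : ℕ} (h : lam.rowLen p = 0) (hm : ∀ i < p, n - p ≤ lam.rowLen i) :
    Hstrip n p q lam =
      ∏ a : Fin p, ∏ j ∈ Finset.Ico (n - q) (n - p), (shiftedRows p lam a - j) := by
  rw [Hstrip, Finset.prod_filter, prod_cells_eq_prod_rows h]
  refine Finset.prod_congr rfl fun a _ => ?_
  have hstrip : (Finset.range (lam.rowLen a.rev)).filter (fun j => n - q ≤ j ∧ j < n - p) =
      Finset.Ico (n - q) (n - p) := by
    ext j
    have := hm _ a.rev.2
    simp only [Finset.mem_filter, Finset.mem_range, Finset.mem_Ico]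
    omega
  rw [← Finset.prod_filter, hstrip]
  exact Finset.prod_congr rfl fun j hj =>
    hookLen_eq_shiftedRows_sub h hm a (Finset.mem_Ico.1 hj).2

lemma Hstrip_mul_prod_factorial {q n : ℕ} (hpq : p ≤ q) (h : lam.rowLen p = 0)
    (hm : ∀ i < p, n - p ≤ lam.rowLen i) :
    Hstrip n p q lam * ∏ a : Fin p, (shiftedRows p lam a - (n - p)).factorial =
      ∏ a : Fin p, (shiftedRows p lam a - (n - q)).factorial := by
  rw [Hstrip_eq_prod_sub h hm, ← Finset.prod_mul_distrib]
  exact Finset.prod_congr rfl fun a _ =>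
    prod_Ico_sub_mul_factorial (by omega) (le_shiftedRows hm a)

end Hooks

section RectangleExtensions

variable {p q n m : ℕ} {lam : YoungDiagram}

/-- The diagrams with at most `p` rows that contain the `p × m` rectangle. -/
def rectangleExtensions (p m : ℕ) : Set YoungDiagram :=
  {lam | lam.rowLen p = 0 ∧ ∀ i < p, m ≤ lam.rowLen i}

/-- The strictly increasing sequence encoding what is left of an element of
`rectangleExtensions p m` once the `p × m` rectangle is removed. -/
def reducedRows (p m : ℕ) (lam : YoungDiagram) (a : Fin p) : ℕ := shiftedRows p lam a - m

lemma reducedRows_add (h : lam ∈ rectangleExtensions p m) (a : Fin p) :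
    reducedRows p m lam a + m = shiftedRows p lam a :=
  Nat.sub_add_cancel (le_shiftedRows h.2 a)

lemma strictMono_reducedRows (h : lam ∈ rectangleExtensions p m) :
    StrictMono (reducedRows p m lam) := fun a b hab => by
  have := strictMono_shiftedRows p lam hab
  rw [← reducedRows_add h a, ← reducedRows_add h b] at this
  omega

/-- Removing the `p × m` rectangle, as a bijection onto strictly increasing sequences. -/
def reducedRowsEquiv (p m : ℕ) : rectangleExtensions p m ≃ {k : Fin p → ℕ // StrictMono k} := by
  refine .ofBijective (fun lam => ⟨reducedRows p m lam, strictMono_reducedRows lam.2⟩)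
    ⟨fun lam ν h => Subtype.ext (injOn_shiftedRows p lam.2.1 ν.2.1 (funext fun a => ?_)),
      fun k => ?_⟩
  · have hreduced : reducedRows p m lam = reducedRows p m ν := congrArg Subtype.val h
    rw [← reducedRows_add lam.2, ← reducedRows_add ν.2, hreduced]
  · obtain ⟨lam, h0, hlam⟩ := exists_shiftedRows_eq (k.2.add_const m)
    refine ⟨⟨lam, h0, fun i hi => ?_⟩, Subtype.ext (funext fun a => ?_)⟩
    · have hi' := congrFun hlam (Fin.rev ⟨i, hi⟩)
      have := val_le_of_strictMono k.2 (Fin.rev ⟨i, hi⟩)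
      rw [shiftedRows_rev] at hi'
      simp only at hi'
      omega
    · simp [reducedRows, hlam]

lemma card_add_sum_val_eq_mul_add_sum (h : lam ∈ rectangleExtensions p m) :
    lam.card + ∑ a : Fin p, (a : ℕ) = p * m + ∑ a, reducedRows p m lam a := by
  simp only [card_add_sum_val h.1, ← reducedRows_add h, Finset.sum_add_distrib, Finset.sum_const,
    Finset.card_univ, Fintype.card_fin, smul_eq_mul, add_comm]

lemma mul_le_card (h : lam ∈ rectangleExtensions p m) : p * m ≤ lam.card := by
  have := card_add_sum_val_eq_mul_add_sum h
  have : ∑ a : Fin p, (a : ℕ) ≤ ∑ a, reducedRows p m lam a :=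
    Finset.sum_le_sum fun a _ => val_le_of_strictMono (strictMono_reducedRows h) a
  omega

lemma det_vandermonde_reducedRows (h : lam ∈ rectangleExtensions p m) :
    (Matrix.vandermonde fun a => (reducedRows p m lam a : ℝ)).det =
      (Matrix.vandermonde fun a => (shiftedRows p lam a : ℝ)).det := by
  rw [← Matrix.det_vandermonde_add _ (m : ℝ)]
  simp only [← reducedRows_add h, Nat.cast_add]

/-- The coefficient with which the diagram `lam` contributes `x ^ |lam|` to `Gfun p q n x`. -/
def gfunWeight (p q n : ℕ) (lam : YoungDiagram) : ℝ :=
  numSSYT lam p / hookProd lam * (indSup n p lam * Hstrip n p q lam)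

lemma gfunWeight_nonneg (p q n : ℕ) (lam : YoungDiagram) : 0 ≤ gfunWeight p q n lam := by
  have : 0 ≤ indSup n p lam := by
    unfold indSup
    positivity
  unfold gfunWeight
  positivity

lemma gfunWeight_eq_zero (h : lam ∉ rectangleExtensions p (n - p)) : gfunWeight p q n lam = 0 := by
  by_cases h0 : lam.rowLen p = 0
  · have hrect : ¬ ∀ i < p, n - p ≤ lam.rowLen i := fun hm => h ⟨h0, hm⟩
    rw [gfunWeight, indSup, if_neg hrect, zero_mul, mul_zero]
  · rw [gfunWeight, numSSYT_eq_zero_of_rowLen_ne_zero h0, Nat.cast_zero, zero_div, zero_mul]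

lemma Hstrip_mul_prod_factorial_reducedRows (hpq : p ≤ q) (hqn : q ≤ n)
    (h : lam ∈ rectangleExtensions p (n - p)) :
    (Hstrip n p q lam : ℝ) * ∏ a, ((reducedRows p (n - p) lam a).factorial : ℝ) =
      ∏ a, ((reducedRows p (n - p) lam a + (q - p)).factorial : ℝ) := by
  have hshift (a : Fin p) :
      reducedRows p (n - p) lam a + (q - p) = shiftedRows p lam a - (n - q) := by
    have := reducedRows_add h a
    omega
  simp only [hshift]
  exact_mod_cast Hstrip_mul_prod_factorial hpq h.1 h.2

lemma prod_factorial_ne_zero {ι : Type*} [Fintype ι] (f : ι → ℕ) :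
    ∏ a, ((f a).factorial : ℝ) ≠ 0 :=
  Finset.prod_ne_zero_iff.2 fun _ _ => by positivity

lemma gfunWeight_mul_prod_factorial (hpq : p ≤ q) (hqn : q ≤ n)
    (h : lam ∈ rectangleExtensions p (n - p)) :
    gfunWeight p q n lam * ∏ j : Fin p, ((j : ℕ).factorial : ℝ) =
      (Matrix.vandermonde fun a => (reducedRows p (n - p) lam a : ℝ)).det ^ 2 *
        ∏ a, kummerWeight (q - p) (n - p) (reducedRows p (n - p) lam a) := by
  have hssyt := prod_factorial_mul_det_choose (shiftedRows p lam)
  rw [← numSSYT_eq_det_choose h.1, ← det_vandermonde_reducedRows h] at hssyt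
  have hhook := hookProd_mul_det_vandermonde h.1
  rw [← det_vandermonde_reducedRows h] at hhook
  simp only [← reducedRows_add h] at hhook
  have hprod := hhook ▸ prod_factorial_ne_zero fun a => reducedRows p (n - p) lam a + (n - p)
  have hhook_ne := left_ne_zero_of_mul hprod
  have hk := prod_factorial_ne_zero (reducedRows p (n - p) lam)
  simp only [gfunWeight, indSup, if_pos h.2, one_mul, kummerWeight, Finset.prod_div_distrib,
    Finset.prod_mul_distrib, ← hhook, ← Hstrip_mul_prod_factorial_reducedRows hpq hqn h]
  field_simp
  linear_combination (Hstrip n p q lam : ℝ) * hssyt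

lemma gfunWeight_mul_pow_card (hpq : p ≤ q) (hqn : q ≤ n)
    (h : lam ∈ rectangleExtensions p (n - p)) {x : ℝ} (hx : x ≠ 0) :
    gfunWeight p q n lam * x ^ lam.card =
      x ^ (p * (n - p)) /
          ((∏ j : Fin p, ((j : ℕ).factorial : ℝ)) * ∏ i : Fin p, x ^ (i : ℕ)) *
        kummerEnsemble (q - p) (n - p) p x (reducedRows p (n - p) lam) := by
  have hfact : ∏ j : Fin p, ((j : ℕ).factorial : ℝ) ≠ 0 :=
    prod_factorial_ne_zero _
  have hpow : ∏ i : Fin p, x ^ (i : ℕ) ≠ 0 := Finset.prod_ne_zero_iff.2 fun i _ => pow_ne_zero _ hx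
  have hcard : x ^ lam.card * ∏ i : Fin p, x ^ (i : ℕ) =
      x ^ (p * (n - p)) * ∏ a, x ^ reducedRows p (n - p) lam a := by
    simp only [Finset.prod_pow_eq_pow_sum, ← pow_add, card_add_sum_val_eq_mul_add_sum h]
  rw [kummerEnsemble, Finset.prod_mul_distrib, div_mul_eq_mul_div,
    eq_div_iff (mul_ne_zero hfact hpow)]
  linear_combination gfunWeight p q n lam * (∏ j : Fin p, ((j : ℕ).factorial : ℝ)) * hcard +
    x ^ (p * (n - p)) * (∏ a, x ^ reducedRows p (n - p) lam a) *
      gfunWeight_mul_prod_factorial hpq hqn h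

lemma hasSum_gfunWeight_mul_pow_card (hpq : p ≤ q) (hqn : q ≤ n) {x : ℝ} (hx : 0 < x) :
    HasSum (fun lam => gfunWeight p q n lam * x ^ lam.card)
      (x ^ (p * (n - p)) * wronskian (kummerFun (q - p) (n - p)) p x /
        ∏ j : Fin p, ((j : ℕ).factorial : ℝ)) := by
  refine (hasSum_subtype_iff_of_support_subset
    (s := rectangleExtensions p (n - p)) fun lam hlam => ?_).1 ?_
  · exact not_not.1 fun h => left_ne_zero_of_mul hlam (gfunWeight_eq_zero h)
  have hensemble := ((reducedRowsEquiv p (n - p)).hasSum_iff.2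
    (hasSum_kummerEnsemble_strictMono (N := p) (by omega : q - p ≤ n - p) hx.le)).mul_left
    (x ^ (p * (n - p)) / ((∏ j : Fin p, ((j : ℕ).factorial : ℝ)) * ∏ i : Fin p, x ^ (i : ℕ)))
  have hpow : ∏ i : Fin p, x ^ (i : ℕ) ≠ 0 :=
    Finset.prod_ne_zero_iff.2 fun i _ => pow_ne_zero _ hx.ne'
  have hvalue : x ^ (p * (n - p)) * wronskian (kummerFun (q - p) (n - p)) p x /
        ∏ j : Fin p, ((j : ℕ).factorial : ℝ) =
      x ^ (p * (n - p)) / ((∏ j : Fin p, ((j : ℕ).factorial : ℝ)) * ∏ i : Fin p, x ^ (i : ℕ)) *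
        ((∏ i : Fin p, x ^ (i : ℕ)) * wronskian (kummerFun (q - p) (n - p)) p x) := by
    field_simp
  rw [hvalue]
  exact hensemble.congr_fun fun lam => gfunWeight_mul_pow_card hpq hqn lam.2 hx.ne'

end RectangleExtensions

section GeneratingFunction

variable {p q n : ℕ}

lemma hasSum_tsum_fiber_mul_pow {ι : Type*} {w : ι → ℝ} {d : ι → ℕ} {x s : ℝ}
    (h : HasSum (fun i => w i * x ^ d i) s) :
    HasSum (fun l => (∑' i, if d i = l then w i else 0) * x ^ l) s := by
  refine (h.tsum_fiberwise d).congr_fun fun l => ?_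
  rw [tsum_subtype (d ⁻¹' {l}) fun i => w i * x ^ d i, ← tsum_mul_right]
  refine tsum_congr fun i => ?_
  by_cases hi : d i = l <;> simp [Set.indicator, hi]

/-- The Taylor coefficients of `Gfun p q n` at `0`. -/
def gfunCoeff (p q n l : ℕ) : ℝ :=
  ∑' lam : YoungDiagram, if lam.card = l then gfunWeight p q n lam else 0

lemma gfunCoeff_nonneg (p q n l : ℕ) : 0 ≤ gfunCoeff p q n l :=
  tsum_nonneg fun lam => by
    have := gfunWeight_nonneg p q n lam
    positivity

lemma gfunCoeff_eq_zero {l : ℕ} (h : l < p * (n - p)) : gfunCoeff p q n l = 0 := by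
  refine (tsum_congr fun lam => ?_).trans tsum_zero
  refine ite_eq_right_iff.2 fun hl => gfunWeight_eq_zero fun hlam => ?_
  exact (hl ▸ h).not_ge (mul_le_card hlam)

lemma pow_div_factorial_mul_Eword (hp : 1 ≤ p) (x : ℝ) (l : ℕ) :
    ((p : ℝ) * x) ^ l / l.factorial *
        Eword l p (fun lam => indSup n p lam * (Hstrip n p q lam : ℝ)) =
      gfunCoeff p q n l * x ^ l := by
  rw [Eword, gfunCoeff, ← tsum_mul_left, ← tsum_mul_right]
  refine tsum_congr fun lam => ?_
  split_ifs with hl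
  · have hpl : (p : ℝ) ^ l ≠ 0 := by positivity
    rw [Pword, fSYT, gfunWeight, hl, mul_pow]
    field_simp
  · rw [mul_zero, zero_mul]

lemma Gfun_eq_entireSum (hp : 1 ≤ p) : Gfun p q n = entireSum (gfunCoeff p q n) := by
  refine funext fun x => tsum_congr fun l => ?_
  split_ifs with h
  · exact pow_div_factorial_mul_Eword hp x l
  · rw [gfunCoeff_eq_zero (not_le.1 h), zero_mul]

lemma hasSum_gfunCoeff_mul_pow (hpq : p ≤ q) (hqn : q ≤ n) {x : ℝ} (hx : 0 < x) :
    HasSum (fun l => gfunCoeff p q n l * x ^ l)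
      (x ^ (p * (n - p)) * wronskian (kummerFun (q - p) (n - p)) p x /
        ∏ j : Fin p, ((j : ℕ).factorial : ℝ)) :=
  hasSum_tsum_fiber_mul_pow (hasSum_gfunWeight_mul_pow_card hpq hqn hx)

lemma isEntireSeq_gfunCoeff (hpq : p ≤ q) (hqn : q ≤ n) : IsEntireSeq (gfunCoeff p q n) := by
  refine fun r hr => .of_nonneg_of_le (fun l => by positivity) (fun l => ?_)
    (hasSum_gfunCoeff_mul_pow hpq hqn (x := r + 1) (by positivity)).summable
  have := gfunCoeff_nonneg p q n l
  rw [Real.norm_of_nonneg this]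
  gcongr
  exact (lt_add_one r).le

/-- The Wronskian of the Kummer functions that remains of `Gfun p q n` once the power
`x ^ (p * (n - p))` and a constant are divided out. -/
def gfunTau (p q n : ℕ) : ℝ → ℝ := wronskian (kummerFun (q - p) (n - p)) p

lemma analyticAt_gfunTau (hqn : q ≤ n) (x : ℝ) : AnalyticAt ℝ (gfunTau p q n) x :=
  analyticAt_wronskian (fun j => analyticAt_kummerFun (by omega) j x) p

lemma gfunTau_zero_ne_zero (hqn : q ≤ n) : gfunTau p q n 0 ≠ 0 :=
  wronskian_kummerFun_zero_ne_zero (by omega) p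

theorem Gfun_eq_pow_mul_gfunTau (hp : 1 ≤ p) (hpq : p ≤ q) (hqn : q ≤ n) :
    Gfun p q n = fun x =>
      x ^ (p * (n - p)) * gfunTau p q n x / ∏ j : Fin p, ((j : ℕ).factorial : ℝ) := by
  have hent := isEntireSeq_gfunCoeff hpq hqn
  have hfact : ∏ j : Fin p, ((j : ℕ).factorial : ℝ) ≠ 0 :=
    prod_factorial_ne_zero _
  rw [Gfun_eq_entireSum hp]
  -- Both sides are analytic on `ℝ` and agree on the positive half-line.
  refine AnalyticOnNhd.eq_of_eventuallyEq (𝕜 := ℝ) (z₀ := 1) (fun x _ => hent.analyticAt x)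
    (fun x _ => ((analyticAt_id.pow _).mul (analyticAt_gfunTau hqn x)).div analyticAt_const hfact)
    ?_
  filter_upwards [lt_mem_nhds zero_lt_one] with x hx
  exact (hent.hasSum x).unique (hasSum_gfunCoeff_mul_pow hpq hqn hx)

lemma mul_logDeriv_pow_mul_div {W : ℝ → ℝ} {m : ℕ} {c x : ℝ} (hW : DifferentiableAt ℝ W x)
    (hG : x ^ m * W x / c ≠ 0) :
    x * logDeriv (fun y => y ^ m * W y / c) x = m + x * logDeriv W x := by
  obtain ⟨hpow, hWx⟩ := mul_ne_zero_iff.1 (div_ne_zero_iff.1 hG).1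
  have hlog : logDeriv (fun y => y ^ m * W y / c) x = m / x + logDeriv W x := by
    simp only [div_eq_mul_inv _ c]
    rw [logDeriv_mul_const _ _ (inv_ne_zero (div_ne_zero_iff.1 hG).2),
      logDeriv_mul (f := fun y => y ^ m) x hpow hWx (differentiableAt_pow m) hW, logDeriv_pow]
  have hmx : x * (m / x) = m := by
    rcases eq_or_ne m 0 with rfl | hm
    · simp
    · exact mul_div_cancel₀ _ ((pow_ne_zero_iff hm).1 hpow)
  rw [hlog, mul_add, hmx]

end GeneratingFunction

section Painleve

variable {p q n : ℕ} {x : ℝ}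

/-- The function `u` of the theorem: the right-hand side is regular at `0`, and it equals
`x * G' x / G x - p * x` wherever `G = Gfun p q n` does not vanish. -/
def gfunSigma (p q n : ℕ) (x : ℝ) : ℝ :=
  p * (n - p) - p * x + x * logDeriv (gfunTau p q n) x

lemma gfunSigma_zero : gfunSigma p q n 0 = p * (n - p) := by
  simp [gfunSigma]

lemma analyticAt_gfunSigma (hqn : q ≤ n) (hx : gfunTau p q n x ≠ 0) :
    AnalyticAt ℝ (gfunSigma p q n) x :=
  (analyticAt_const.sub (analyticAt_const.mul analyticAt_id)).add
    (analyticAt_id.mul ((analyticAt_gfunTau hqn x).deriv.div (analyticAt_gfunTau hqn x) hx))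

lemma gfunSigma_eq (hp : 1 ≤ p) (hpq : p ≤ q) (hqn : q ≤ n) (hx : Gfun p q n x ≠ 0) :
    gfunSigma p q n x = x * deriv (Gfun p q n) x / Gfun p q n x - p * x := by
  rw [mul_div_assoc, ← logDeriv_apply]
  rw [Gfun_eq_pow_mul_gfunTau hp hpq hqn] at hx ⊢
  rw [mul_logDeriv_pow_mul_div (analyticAt_gfunTau hqn x).differentiableAt hx, Nat.cast_mul,
    Nat.cast_sub (hpq.trans hqn), gfunSigma]
  ring

theorem eventually_painleve_gfunSigma (hpq : p ≤ q) (hqn : q ≤ n) :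
    ∀ᶠ x in 𝓝 0, x ^ 2 * deriv (deriv (deriv (gfunSigma p q n))) x
      + x * deriv (deriv (gfunSigma p q n)) x + 6 * x * deriv (gfunSigma p q n) x ^ 2
      - 4 * gfunSigma p q n x * deriv (gfunSigma p q n) x
      + (-x ^ 2 + 2 * ((n : ℝ) + 2 * (p - q)) * x - (n - 2 * p) ^ 2) * deriv (gfunSigma p q n) x
      - (-x + ((n : ℝ) + 2 * (p - q))) * gfunSigma p q n x
      + p * (p - q) * (x + n - 2 * p) = 0 := by
  have hle : q - p ≤ n - p := by omega
  have hq : ((q - p : ℕ) : ℝ) = q - p := Nat.cast_sub hpq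
  have hn : ((n - p : ℕ) : ℝ) = n - p := Nat.cast_sub (hpq.trans hqn)
  have hW0 : gfunTau p q n 0 ≠ 0 := gfunTau_zero_ne_zero hqn
  refine eventually_painleve_of_kummer (F := kummerFun (q - p) (n - p))
    (fun j => analyticAt_kummerFun hle j 0)
    (fun j => .of_forall fun x => by rw [← hq, ← hn]; exact kummer_equation_kummerFun hle j x)
    (fun j => .of_forall fun x => by rw [← hq]; exact kummerFun_succ hle j x)
    (fun k _ => wronskian_kummerFun_zero_ne_zero hle k) (analyticAt_gfunSigma hqn hW0) ?_
  filter_upwards [(analyticAt_gfunTau hqn 0).continuousAt.eventually_ne hW0] with x hx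
  change gfunSigma p q n x * gfunTau p q n x = _ * gfunTau p q n x + x * deriv (gfunTau p q n) x
  rw [gfunSigma, logDeriv_apply]
  field_simp

lemma deriv_gfunSigma_zero (hp : 1 ≤ p) (hpq : p ≤ q) (hqn : q ≤ n) :
    deriv (gfunSigma p q n) 0 = -(p * (n - q)) / n := by
  have hn : (n : ℝ) ≠ 0 := Nat.cast_ne_zero.2 (by omega)
  -- At `x = 0` only `u` and `u'` survive in the equation, and `4 u(0) + (n - 2p)² = n²`.
  have hode := (eventually_painleve_gfunSigma hpq hqn).self_of_nhds
  rw [gfunSigma_zero] at hode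
  refine (eq_div_iff hn).2 (mul_left_cancel₀ hn ?_)
  linear_combination -hode

end Painleve

/-- `u(x) = x G'(x)/G(x) − p x` extends analytically near `x = 0`,
with `u(0) = p(n−p)`, `u'(0) = −p(n−q)/n`, and satisfies the Painlevé V type
equation `x²u‴ + xu″ + 6x u′² − 4uu′ + 4Q u′ − 2Q′ u + 2R = 0`. -/
theorem statement1 (p q n : ℕ) (hp : 1 ≤ p) (hpq : p ≤ q) (hqn : q ≤ n) :
    ∃ ε > (0 : ℝ), ∃ v : ℝ → ℝ,
      AnalyticOnNhd ℝ v (Metric.ball (0 : ℝ) ε) ∧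
      (∀ x ∈ Metric.ball (0 : ℝ) ε, Gfun p q n x ≠ 0 →
        v x = x * deriv (Gfun p q n) x / Gfun p q n x - (p : ℝ) * x) ∧
      v 0 = (p : ℝ) * ((n : ℝ) - p) ∧
      deriv v 0 = -((p : ℝ) * ((n : ℝ) - q)) / n ∧
      (∀ x ∈ Metric.ball (0 : ℝ) ε,
        x ^ 2 * iteratedDeriv 3 v x + x * iteratedDeriv 2 v x +
          6 * x * (deriv v x) ^ 2 - 4 * v x * deriv v x +
          4 * ((-(x ^ 2) + 2 * ((n : ℝ) + 2 * ((p : ℝ) - q)) * x -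
                ((n : ℝ) - 2 * p) ^ 2) / 4) * deriv v x -
          2 * ((-(2 * x) + 2 * ((n : ℝ) + 2 * ((p : ℝ) - q))) / 4) * v x +
          2 * ((p : ℝ) * ((p : ℝ) - q) * (x + (n : ℝ) - 2 * p) / 2) = 0) := by
  have htau : ∀ᶠ x in 𝓝 0, gfunTau p q n x ≠ 0 :=
    (analyticAt_gfunTau hqn 0).continuousAt.eventually_ne (gfunTau_zero_ne_zero hqn)
  obtain ⟨ε, hε, hball⟩ :=
    Metric.eventually_nhds_iff_ball.1 (htau.and (eventually_painleve_gfunSigma hpq hqn))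
  refine ⟨ε, hε, gfunSigma p q n, fun x hx => analyticAt_gfunSigma hqn (hball x hx).1,
    fun x _ hG => gfunSigma_eq hp hpq hqn hG, gfunSigma_zero, deriv_gfunSigma_zero hp hpq hqn,
    fun x hx => ?_⟩
  rw [iteratedDeriv_succ, iteratedDeriv_succ, iteratedDeriv_one]
  linear_combination (hball x hx).2

end
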